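/- If at least one of the rings S[ω], S[μ] is not integrally closed, then the integral closure R of S in K = L(ω,μ) is a free S-module (of rank p²). -/

import Mathlib

/-- A height one prime ideal of a commutative ring. -/
def IsHeightOnePrime {S : Type*} [CommRing S] (P : Ideal S) : Prop :=
  ∃ hP : P.IsPrime, Order.height (⟨P, hP⟩ : PrimeSpectrum S) = 1

/-- `c ∈ S` is square free if `P S_P = c S_P` for every height one prime `P` containing `c`. -/
def PaperSquarefree {S : Type*} [CommRing S] (c : S) : Prop :=
  ∀ (P : Ideal S) (hP : P.IsPrime), Order.height (⟨P, hP⟩ : PrimeSpectrum S) = 1 → c ∈ P →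
    haveI := hP
    Ideal.map (algebraMap S (Localization.AtPrime P)) P =
      Ideal.span {algebraMap S (Localization.AtPrime P) c}

/-- Two elements satisfy `𝒜₁` if no height one prime contains both of them. -/
def SatisfiesA1 {S : Type*} [CommRing S] (f g : S) : Prop :=
  ∀ P : Ideal S, IsHeightOnePrime P → ¬(f ∈ P ∧ g ∈ P)

/-- The depth of a module over a local ring: the supremum of the lengths of
regular sequences on `M` contained in the maximal ideal. -/
noncomputable def modDepth (S : Type*) [CommRing S] [IsLocalRing S]
    (M : Type*) [AddCommGroup M] [Module S M] : ℕ∞ :=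
  sSup {n : ℕ∞ | ∃ rs : List S, (rs.length : ℕ∞) = n ∧
    (∀ r ∈ rs, r ∈ IsLocalRing.maximalIdeal S) ∧ RingTheory.Sequence.IsRegular M rs}

/-- A commutative ring is Cohen-Macaulay if each of its localizations at a prime
has depth equal to its Krull dimension. -/
def IsCMRing (R : Type*) [CommRing R] : Prop :=
  ∀ (Q : Ideal R) (hQ : Q.IsPrime),
    haveI := hQ
    (modDepth (Localization.AtPrime Q) (Localization.AtPrime Q) : WithBot ℕ∞) =
      ringKrullDim (Localization.AtPrime Q)

/-- The `n`-th symbolic power of a prime ideal `P`, i.e. `Pⁿ A_P ∩ A`. -/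
noncomputable def symbPow {A : Type*} [CommRing A] (P : Ideal A) (hP : P.IsPrime) (n : ℕ) :
    Ideal A :=
  haveI := hP
  Ideal.comap (algebraMap A (Localization.AtPrime P))
    (Ideal.map (algebraMap A (Localization.AtPrime P)) (P ^ n))

/-- `ω`, as an element of the subalgebra `A = S[ω,μ]`. -/
noncomputable def omegaA {S : Type*} [CommRing S] {K : Type*} [Field K] [Algebra S K]
    (ω μ : K) : Algebra.adjoin S ({ω, μ} : Set K) :=
  ⟨ω, Algebra.subset_adjoin (Set.mem_insert _ _)⟩

/-- `μ`, as an element of the subalgebra `A = S[ω,μ]`. -/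
noncomputable def muA {S : Type*} [CommRing S] {K : Type*} [Field K] [Algebra S K]
    (ω μ : K) : Algebra.adjoin S ({ω, μ} : Set K) :=
  ⟨μ, Algebra.subset_adjoin (Set.mem_insert_of_mem _ rfl)⟩

/-- The ideal `P = (p, ω−h₁, μ−h₂)` of `A = S[ω,μ]`. -/
noncomputable def Pid {S : Type*} [CommRing S] {K : Type*} [Field K] [Algebra S K]
    (p : ℕ) (ω μ : K) (h₁ h₂ : S) : Ideal (Algebra.adjoin S ({ω, μ} : Set K)) :=
  Ideal.span {(p : Algebra.adjoin S ({ω, μ} : Set K)),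
    omegaA ω μ - algebraMap S _ h₁, muA ω μ - algebraMap S _ h₂}

/-- The colon module `(A :_K N) = {x ∈ K : x·N ⊆ A}`, as an `S`-submodule of `K`. -/
noncomputable def colonSubmodule (S : Type*) [CommRing S] (K : Type*) [Field K] [Algebra S K]
    (A : Subalgebra S K) (N : Set K) : Submodule S K where
  carrier := {x : K | ∀ z ∈ N, x * z ∈ A}
  add_mem' := fun hx hy z hz => by
    simpa [add_mul] using add_mem (hx z hz) (hy z hz)
  zero_mem' := fun z hz => by simpa using A.zero_mem
  smul_mem' := fun c x hx z hz => by
    rw [Algebra.smul_def, mul_assoc]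
    exact mul_mem (A.algebraMap_mem c) (hx z hz)

/-- `M` admits a free resolution `0 → Sⁿ → Sᵐ → M → 0`; for a finitely generated
module over a Noetherian local ring this says exactly `pd_S(M) ≤ 1`. -/
def HasFreeResLengthLE1 (S : Type*) [CommRing S] (M : Type*) [AddCommGroup M] [Module S M] :
    Prop :=
  ∃ (n m : ℕ) (φ : (Fin n → S) →ₗ[S] (Fin m → S)) (ψ : (Fin m → S) →ₗ[S] M),
    Function.Injective φ ∧ Function.Surjective ψ ∧ LinearMap.range φ = LinearMap.ker ψ

/-- The ideal `Q` contains an `S`-regular sequence of length three, i.e. `Q` has grade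
(at least) three. -/
def ContainsRegSeq3 (S : Type*) [CommRing S] (Q : Ideal S) : Prop :=
  ∃ rs : List S, rs.length = 3 ∧ (∀ r ∈ rs, r ∈ Q) ∧ RingTheory.Sequence.IsRegular S rs

/- As `f` and `g` are square free without common height one primes, traces against the monomials
`ω ^ i * μ ^ j` show that `p ^ 2 • R ⊆ S[ω, μ]`: if `d` is a coordinate of an element of
`p ^ 2 • R`, then `f ^ i * g ^ j * d ^ p` is integral for some `i, j < p`, which forces `d` to be
integral at every height one prime. So a family of integral elements whose span contains the
monomials in `ω - h₁` and `μ - h₂` spans `R` as soon as it is linearly independent modulo `p`.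

If `p ∤ a`, the powers of `ω - h₁` are independent modulo `p`, so `S[ω]` is integrally closed. By
symmetry we may therefore assume `p ∣ a`. Let `P` be a prime over `p` in the integral closure of `S`
in an algebraically closed field. Every conjugate of `ω - h₁` is divisible by a `(p - 1)`-st root of
`p`, and the quotients are pairwise distinct modulo `P`. The same holds for `μ - h₂` if `p ∣ b`; if
`p ∤ b`, then `μ - h₂` is divisible by a `p`-th root of `p` with quotient outside `P`. Dividing the
monomials in `ω - h₁` and `μ - h₂` by the largest powers of `p` that this allows gives a basis of
`R`: a combination lying in `p • R` is separated by valuation into terms of equal weight, and those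
are handled by a Vandermonde argument over the conjugates. -/

section HeightOne

open Ideal

variable {S : Type*} [CommRing S]

theorem paperSquarefree_of_isUnit {c : S} (hc : IsUnit c) : PaperSquarefree c :=
  fun P hP _ hcP ↦ (hP.ne_top (P.eq_top_of_isUnit_mem hcP hc)).elim

theorem satisfiesA1_of_isUnit {c : S} (hc : IsUnit c) (d : S) : SatisfiesA1 c d :=
  fun P ⟨hP, _⟩ hcd ↦ hP.ne_top (P.eq_top_of_isUnit_mem hcd.1 hc)

variable [IsDomain S]

theorem isHeightOnePrime_of_mem_minimalPrimes [IsNoetherianRing S] {P : Ideal S} {q : S}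
    (hq : q ≠ 0) (hP : P ∈ (span {q}).minimalPrimes) : IsHeightOnePrime P := by
  have hprime : P.IsPrime := hP.1.1
  have hqP : q ∈ P := hP.1.2 (mem_span_singleton_self q)
  refine ⟨hprime, ?_⟩
  rw [← PrimeSpectrum.height_eq_orderHeight]
  refine le_antisymm (height_le_one_of_isPrincipal_of_mem_minimalPrimes (span {q}) P hP) ?_
  rw [Order.one_le_iff_ne_zero, PrimeSpectrum.height_eq_orderHeight, Ne, Order.height_eq_zero]
  intro hmin
  have hbot : P ≤ ⊥ := hmin (b := ⟨⊥, isPrime_bot⟩) (bot_le (a := P))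
  exact hq ((Submodule.mem_bot S).1 (hbot hqP))

theorem isHeightOnePrime_span_singleton [IsNoetherianRing S] {q : S} (hq : Prime q) :
    IsHeightOnePrime (span {q}) := by
  have : (span {q}).IsPrime := (span_singleton_prime hq.ne_zero).2 hq
  exact isHeightOnePrime_of_mem_minimalPrimes hq.ne_zero
    (by rw [minimalPrimes_eq_subsingleton_self]; rfl)

theorem PaperSquarefree.exists_dvd_mul {c q : S} {P : Ideal S} (hc : PaperSquarefree c)
    (hP : IsHeightOnePrime P) (hcP : c ∈ P) (hq : q ∈ P) : ∃ u ∉ P, c ∣ u * q := by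
  obtain ⟨hprime, hheight⟩ := hP
  have hmem : algebraMap S (Localization.AtPrime P) q ∈
      span {algebraMap S (Localization.AtPrime P) c} :=
    hc P hprime hheight hcP ▸ mem_map_of_mem _ hq
  obtain ⟨z, hz⟩ := mem_span_singleton'.1 hmem
  obtain ⟨⟨y, u⟩, hyu⟩ := IsLocalization.surj P.primeCompl z
  refine ⟨u, u.2, y, IsLocalization.injective (Localization.AtPrime P)
    P.primeCompl_le_nonZeroDivisors ?_⟩
  rw [map_mul, map_mul, ← hz, ← hyu]
  ring

theorem PaperSquarefree.not_sq_dvd [IsNoetherianRing S] {c q : S} (hc : PaperSquarefree c)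
    (hq : Prime q) : ¬ q ^ 2 ∣ c := by
  intro hdvd
  have hcP : c ∈ span {q} := mem_span_singleton.2 ((dvd_pow_self q two_ne_zero).trans hdvd)
  obtain ⟨u, hu, huq⟩ := hc.exists_dvd_mul (isHeightOnePrime_span_singleton hq) hcP
    (mem_span_singleton_self q)
  have : q * q ∣ u * q := (sq q ▸ hdvd).trans huq
  exact hu (mem_span_singleton.2 ((mul_dvd_mul_iff_right hq.ne_zero).1 this))

theorem PaperSquarefree.ne_zero [IsNoetherianRing S] {c q : S} (hc : PaperSquarefree c)
    (hq : Prime q) : c ≠ 0 := by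
  rintro rfl
  exact hc.not_sq_dvd hq (dvd_zero _)

theorem PaperSquarefree.not_dvd_of_eq_pow_add_mul [IsNoetherianRing S] {c q h a : S} {n : ℕ}
    (hc : PaperSquarefree c) (hq : Prime q) (hn : 2 ≤ n) (hch : c = h ^ n + a * q) (ha : q ∣ a) :
    ¬ q ∣ h := by
  intro hh
  refine hc.not_sq_dvd hq (hch ▸ dvd_add ?_ ?_)
  · exact (pow_dvd_pow q hn).trans (pow_dvd_pow_of_dvd hh n)
  · exact sq q ▸ mul_dvd_mul_right ha q

variable {L : Type*} [Field L] [Algebra S L] [IsFractionRing S L] [IsIntegrallyClosed S]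

theorem PaperSquarefree.exists_isIntegral_smul {c : S} {P : Ideal S}
    (hc : PaperSquarefree c) (hc0 : c ≠ 0) (hP : IsHeightOnePrime P) (hcP : c ∈ P) {y : L}
    {i p : ℕ} (hi : i < p) (hy : IsIntegral S (c ^ i • y ^ p)) :
    ∃ u ∉ P, IsIntegral S (u • y) := by
  have hp : 0 < p := by omega
  have hpow : (c • y) ^ p = c ^ (p - i) • (c ^ i • y ^ p) := by
    rw [smul_smul, ← pow_add, Nat.sub_add_cancel hi.le, smul_pow]
  obtain ⟨w, hw⟩ := IsIntegrallyClosed.isIntegral_iff.1 hy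
  obtain ⟨e, he⟩ := IsIntegrallyClosed.isIntegral_iff.1
    (IsIntegral.of_pow hp (hpow ▸ hy.smul (c ^ (p - i))))
  have hep : e ^ p = c ^ (p - i) * w := IsFractionRing.injective S L (by
    rw [map_pow, he, hpow, ← hw, map_mul, Algebra.smul_def])
  have heP : e ∈ P := hP.choose.mem_of_pow_mem p
    (hep ▸ P.mul_mem_right _ (P.pow_mem_of_mem hcP _ (by omega)))
  obtain ⟨u, hu, z, hz⟩ := hc.exists_dvd_mul hP hcP heP
  refine ⟨u, hu, IsIntegrallyClosed.isIntegral_iff.2 ⟨z, ?_⟩⟩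
  have hcL : algebraMap S L c ≠ 0 := by rwa [Ne, map_eq_zero_iff _ (IsFractionRing.injective S L)]
  apply mul_left_cancel₀ hcL
  rw [← map_mul, ← hz, map_mul, he, Algebra.smul_def, Algebra.smul_def]
  ring

variable [IsNoetherianRing S]

/- As `x` is not integral, `x • P` is not contained in `P`: some `q ∈ P` has `q • x = e ∉ P`, and
then `P` is minimal over `q`. -/
theorem isHeightOnePrime_of_mem_iff_isIntegral_smul {P : Ideal S}
    (hP : P.IsPrime) {x : L} (hx : ∀ u, u ∈ P ↔ IsIntegral S (u • x)) : IsHeightOnePrime P := by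
  have hinj := IsFractionRing.injective S L
  have hx1 : ¬ IsIntegral S x := fun h ↦ P.one_notMem ((hx 1).2 (by rwa [one_smul]))
  have hne : P ≠ ⊥ := by
    rintro rfl
    obtain ⟨s, hs⟩ := IsLocalization.exists_integer_multiple (nonZeroDivisors S) x
    exact nonZeroDivisors.ne_zero s.2 ((hx s).2 (IsIntegrallyClosed.isIntegral_iff.2 hs))
  obtain ⟨q, hq, e, he, hqe⟩ : ∃ q ∈ P, ∃ e ∉ P, algebraMap S L e = q • x := by
    by_contra! hcon
    refine hx1 (isIntegral_of_smul_mem_submodule (Submodule.map (Algebra.linearMap S L) P) ?_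
      ((IsNoetherian.noetherian P).map _) x ?_)
    · rwa [Ne, ← Submodule.map_bot (Algebra.linearMap S L),
        (Submodule.map_injective_of_injective (f := Algebra.linearMap S L) hinj).eq_iff]
    · rintro _ ⟨s, hs, rfl⟩
      obtain ⟨y, hy⟩ := IsIntegrallyClosed.isIntegral_iff.1 ((hx s).1 hs)
      refine ⟨y, not_not.1 fun hyP ↦ hcon s hs y hyP hy, ?_⟩
      rw [Algebra.linearMap_apply, hy, Algebra.smul_def, Algebra.linearMap_apply, smul_eq_mul,
        mul_comm]
  have hq0 : q ≠ 0 := by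
    rintro rfl
    rw [zero_smul, map_eq_zero_iff _ hinj] at hqe
    exact he (hqe ▸ P.zero_mem)
  refine isHeightOnePrime_of_mem_minimalPrimes hq0
    ⟨⟨hP, (span_singleton_le_iff_mem _).2 hq⟩, fun Q ⟨hQ, hqQ⟩ hQP z hz ↦ ?_⟩
  obtain ⟨y, hy⟩ := IsIntegrallyClosed.isIntegral_iff.1 ((hx z).1 hz)
  have hez : e * z = q * y := hinj (by
    rw [map_mul, map_mul, hqe, hy, Algebra.smul_def, Algebra.smul_def]; ring)
  have hezQ : e * z ∈ Q := hez ▸ Q.mul_mem_right _ (hqQ (mem_span_singleton_self q))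
  exact (hQ.mem_or_mem hezQ).resolve_left fun h ↦ he (hQP h)

theorem exists_isHeightOnePrime_of_not_isIntegral {d : L}
    (hd : ¬ IsIntegral S d) :
    ∃ P : Ideal S, IsHeightOnePrime P ∧ ∀ u : S, IsIntegral S (u • d) → u ∈ P := by
  set N := (integralClosure S L).toSubmodule
  have hmem : ∀ (x : L) (u : S), u ∈ (⊥ : Submodule S (L ⧸ N)).colon {N.mkQ x} ↔
      IsIntegral S (u • x) := fun x u ↦ by
    rw [Submodule.mem_colon_singleton, Submodule.mem_bot, ← map_smul, Submodule.mkQ_apply,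
      Submodule.Quotient.mk_eq_zero]
    rfl
  obtain ⟨P, hP, hle⟩ := exists_le_isAssociatedPrime_of_isNoetherianRing S (N.mkQ d)
    (by rwa [Ne, Submodule.mkQ_apply, Submodule.Quotient.mk_eq_zero])
  obtain ⟨hprime, x, hx⟩ := isAssociatedPrime_iff.1 hP
  obtain ⟨x, rfl⟩ := N.mkQ_surjective x
  exact ⟨P, isHeightOnePrime_of_mem_iff_isIntegral_smul hprime fun u ↦ by rw [hx, hmem],
    fun u hu ↦ hle ((hmem d u).2 hu)⟩

theorem isIntegral_of_isIntegral_pow_mul_pow_smul_pow {f g : S} (hf0 : f ≠ 0)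
    (hg0 : g ≠ 0) (hf : PaperSquarefree f) (hg : PaperSquarefree g) (hfg : SatisfiesA1 f g) {d : L}
    {i j p : ℕ} (hi : i < p) (hj : j < p) (hd : IsIntegral S ((f ^ i * g ^ j) • d ^ p)) :
    IsIntegral S d := by
  by_contra hd'
  obtain ⟨P, hP, hPd⟩ := exists_isHeightOnePrime_of_not_isIntegral hd'
  have hprime := hP.choose
  have not_mem {c e : S} {k l : ℕ} (hc : PaperSquarefree c) (hc0 : c ≠ 0) (hk : k < p)
      (heP : e ∉ P) (hint : IsIntegral S ((c ^ k * e ^ l) • d ^ p)) : c ∉ P := by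
    intro hcP
    have hint' : IsIntegral S (c ^ k • (e ^ l • d) ^ p) := by
      convert hint.smul ((e ^ l) ^ (p - 1)) using 1
      rw [smul_pow, smul_smul, smul_smul, ← pow_sub_one_mul (by omega : p ≠ 0) (e ^ l)]
      congr 1
      ring
    obtain ⟨u, hu, hud⟩ := hc.exists_isIntegral_smul hc0 hP hcP hk hint'
    rcases hprime.mem_or_mem (hPd _ (smul_smul u (e ^ l) d ▸ hud)) with h | h
    exacts [hu h, heP (hprime.mem_of_pow_mem _ h)]
  by_cases hfP : f ∈ P
  · exact not_mem hf hf0 hi (fun hgP ↦ hfg P hP ⟨hfP, hgP⟩) hd hfP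
  have hgP : g ∉ P := not_mem hg hg0 hj hfP (mul_comm (f ^ i) (g ^ j) ▸ hd)
  have hint : IsIntegral S ((f ^ i * g ^ j) • d) := by
    refine .of_pow (n := p) (by omega) ?_
    rw [smul_pow, ← pow_sub_one_mul (by omega : p ≠ 0), mul_smul]
    exact hd.smul _
  rcases hprime.mem_or_mem (hPd _ hint) with h | h
  exacts [hfP (hprime.mem_of_pow_mem _ h), hgP (hprime.mem_of_pow_mem _ h)]

end HeightOne

section Trace

open Polynomial

variable {L K : Type*} [Field L] [Field K] [Algebra L K]

/- If `X ^ p - c` is reducible, then `θ` is an element of `L` times a `p`-th root of unity, whose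
degree is less than `p` and divides `p ^ n`. -/
theorem minpoly_eq_X_pow_sub_C_of_finrank_eq_prime_pow [FiniteDimensional L K] {p n : ℕ}
    (hp : p.Prime) (hdeg : Module.finrank L K = p ^ n) {θ : K} {c : L}
    (hθ : θ ^ p = algebraMap L K c) (hθL : θ ∉ (algebraMap L K).range) :
    minpoly L θ = X ^ p - C c := by
  have hirr : Irreducible (X ^ p - C c : L[X]) := by
    refine (X_pow_sub_C_irreducible_iff_of_prime hp).2 fun r hr ↦ ?_
    have hr0 : algebraMap L K r ≠ 0 := by
      intro h0
      rw [← hr, map_pow, h0, zero_pow hp.ne_zero] at hθ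
      exact hθL ((pow_eq_zero_iff hp.ne_zero).1 hθ ▸ zero_mem _)
    set ζ := θ / algebraMap L K r with hζ
    have hζ1 : ζ - 1 ≠ 0 := by
      intro h
      rw [hζ, sub_eq_zero, div_eq_one_iff_eq hr0] at h
      exact hθL ⟨r, h.symm⟩
    have hsum : aeval ζ (∑ i ∈ Finset.range p, X ^ i : L[X]) = 0 := by
      refine (mul_eq_zero.1 ?_).resolve_left hζ1
      simp only [map_sum, map_pow, aeval_X]
      rw [mul_geom_sum, hζ, div_pow, hθ, ← hr, map_pow, div_self (pow_ne_zero p hr0), sub_self]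
    have hlt : (minpoly L ζ).natDegree < p := by
      have hdvd := natDegree_le_of_dvd (minpoly.dvd L ζ hsum) (monic_geom_sum_X hp.ne_zero).ne_zero
      have hle : (∑ i ∈ Finset.range p, X ^ i : L[X]).natDegree ≤ p - 1 :=
        natDegree_sum_le_of_forall_le _ _ fun i hi ↦ by
          rw [natDegree_X_pow]
          exact Nat.le_sub_one_of_lt (Finset.mem_range.1 hi)
      have := hp.pos
      omega
    obtain ⟨k, -, hk⟩ := (Nat.dvd_prime_pow hp).1
      (hdeg ▸ minpoly.degree_dvd (K := L) (.of_finite L ζ))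
    have hk0 : k = 0 := by
      by_contra h0
      exact hlt.not_ge (hk ▸ Nat.le_self_pow h0 p)
    rw [hk0, pow_zero, minpoly.natDegree_eq_one_iff] at hk
    obtain ⟨z, hz⟩ := hk
    exact hθL ⟨z * r, by rw [map_mul, hz, hζ, div_mul_cancel₀ _ hr0]⟩
  refine (minpoly.eq_of_irreducible_of_monic hirr ?_ (monic_X_pow_sub_C c hp.ne_zero)).symm
  rw [map_sub, map_pow, aeval_X, aeval_C, hθ, sub_self]

theorem trace_eq_zero_of_finrank_eq_prime_pow [FiniteDimensional L K] {p n : ℕ}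
    (hp : p.Prime) (hdeg : Module.finrank L K = p ^ n) {θ : K} {c : L}
    (hθ : θ ^ p = algebraMap L K c) (hθL : θ ∉ (algebraMap L K).range) :
    Algebra.trace L K θ = 0 := by
  rw [trace_eq_finrank_mul_minpoly_nextCoeff,
    minpoly_eq_X_pow_sub_C_of_finrank_eq_prime_pow hp hdeg hθ hθL,
    nextCoeff_of_natDegree_pos (by rw [natDegree_X_pow_sub_C]; exact hp.pos),
    natDegree_X_pow_sub_C, coeff_sub, coeff_X_pow, coeff_C, if_neg (by have := hp.pos; omega),
    if_neg (by have := hp.two_le; omega), sub_zero, neg_zero, mul_zero]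

theorem trace_div_eq_finrank_mul_repr [FiniteDimensional L K] {ι : Type*} {p n : ℕ}
    (hp : p.Prime) (hdeg : Module.finrank L K = p ^ n) (B : Module.Basis ι L K) {c : ι → L}
    (hB : ∀ i, B i ^ p = algebraMap L K (c i)) (z : K) (k : ι) :
    Algebra.trace L K (z / B k) = p ^ n * B.repr z k := by
  classical
  have := Module.Finite.finite_basis B
  have := Fintype.ofFinite ι
  have htrace (i : ι) : Algebra.trace L K (B i / B k) = if i = k then (p : L) ^ n else 0 := by
    split_ifs with hik
    · rw [hik, div_self (B.ne_zero k), ← map_one (algebraMap L K), Algebra.trace_algebraMap, hdeg,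
        nsmul_one, Nat.cast_pow]
    · refine trace_eq_zero_of_finrank_eq_prime_pow hp hdeg (c := c i / c k)
        (by rw [div_pow, hB, hB, map_div₀]) ?_
      rintro ⟨r, hr⟩
      have hsmul : B i = r • B k := by
        rw [Algebra.smul_def, hr, div_mul_cancel₀ _ (B.ne_zero k)]
      have hcoord := congr_arg (B.repr · i) hsmul
      simp [Ne.symm hik] at hcoord
  conv_lhs => rw [← B.sum_repr z, Finset.sum_div, map_sum]
  simp only [smul_div_assoc, map_smul, htrace, smul_eq_mul, mul_ite, mul_zero, Finset.sum_ite_eq',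
    Finset.mem_univ, if_true]
  rw [mul_comm]

variable {S : Type*} [CommRing S] [Algebra S K]

/- Every conjugate of `y` is `y` times a `p`-th root of unity. -/
theorem isIntegral_algebraMap_trace_div_mul [Algebra S L] [IsScalarTower S L K]
    [FiniteDimensional L K] [Algebra.IsSeparable L K] {p : ℕ} (hp : 0 < p) {x y : K} {c : L}
    (hx : IsIntegral S x) (hy0 : y ≠ 0) (hy : y ^ p = algebraMap L K c) :
    IsIntegral S (algebraMap L K (Algebra.trace L K (x / y)) * y) := by
  let Ω := AlgebraicClosure K
  rw [← isIntegral_algHom_iff (IsScalarTower.toAlgHom S K Ω) (algebraMap K Ω).injective,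
    IsScalarTower.coe_toAlgHom', map_mul, ← IsScalarTower.algebraMap_apply L K Ω,
    trace_eq_sum_embeddings Ω, Finset.sum_mul]
  refine IsIntegral.sum _ fun σ _ ↦ ?_
  have hσy0 : σ y ≠ 0 := (map_ne_zero σ).2 hy0
  have hroot : (algebraMap K Ω y / σ y) ^ p = 1 := by
    rw [div_pow, div_eq_one_iff_eq (pow_ne_zero _ hσy0), ← map_pow, ← map_pow, hy, σ.commutes,
      ← IsScalarTower.algebraMap_apply]
  have hsplit : σ (x / y) * algebraMap K Ω y = σ x * (algebraMap K Ω y / σ y) := by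
    rw [map_div₀]
    ring
  rw [hsplit]
  exact (hx.map (σ.restrictScalars S)).mul (.of_pow hp (hroot ▸ isIntegral_one))

end Trace

section Coordinates

variable {S L K : Type*} [CommRing S] [Field L] [Algebra S L] [Field K] [Algebra L K]
  [Algebra S K] [IsScalarTower S L K]

theorem isIntegral_smul_pow_repr [FiniteDimensional L K] [Algebra.IsSeparable L K] {ι : Type*}
    {p n : ℕ} (hp : p.Prime) (hdeg : Module.finrank L K = p ^ n)
    (B : Module.Basis ι L K) {c : ι → S} (hB : ∀ i, B i ^ p = algebraMap S K (c i)) {x : K}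
    (hx : IsIntegral S x) (i : ι) : IsIntegral S (c i • ((p : S) ^ n • B.repr x i) ^ p) := by
  have hBL (j : ι) : B j ^ p = algebraMap L K (algebraMap S L (c j)) := by
    rw [hB, IsScalarTower.algebraMap_apply S L K]
  have hint := (isIntegral_algebraMap_trace_div_mul hp.pos hx (B.ne_zero i) (hBL i)).pow p
  rw [trace_div_eq_finrank_mul_repr hp hdeg B hBL, mul_pow, hBL, ← map_pow, ← map_mul,
    isIntegral_algebraMap_iff (algebraMap L K).injective] at hint
  rw [Algebra.smul_def, Algebra.smul_def, map_pow, map_natCast, mul_comm]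
  exact hint

variable [IsIntegrallyClosed S] [IsFractionRing S L]

theorem smul_mem_span_image_of_isIntegral_mul_repr {ι : Type*} (B : Module.Basis ι L K) {q : S}
    {x : K} (hx : ∀ i, IsIntegral S (q • B.repr x i)) {s : Set ι}
    (hxs : x ∈ Submodule.span L (B '' s)) : q • x ∈ Submodule.span S (B '' s) := by
  rw [← B.linearCombination_repr x, Finsupp.linearCombination_apply, Finsupp.sum, Finset.smul_sum]
  refine Submodule.sum_mem _ fun i hi ↦ ?_
  obtain ⟨r, hr⟩ := IsIntegrallyClosed.isIntegral_iff.1 (hx i)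
  rw [← smul_assoc, ← hr, algebraMap_smul]
  exact Submodule.smul_mem _ _ (Submodule.subset_span ⟨i, B.mem_span_image.1 hxs hi, rfl⟩)

end Coordinates

section Span

variable {R A : Type*} [CommRing R] [CommRing A] [Algebra R A]

open Polynomial in
theorem span_range_pow_eq_adjoin [Nontrivial R] {x : A} {c h : R} {n : ℕ} (hn : n ≠ 0)
    (hx : (x + algebraMap R A h) ^ n = algebraMap R A c) :
    Submodule.span R (Set.range fun i : Fin n ↦ x ^ (i : ℕ)) =
      Subalgebra.toSubmodule (Algebra.adjoin R {x}) := by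
  have hmonic : ((X + C h) ^ n).Monic := (monic_X_add_C h).pow n
  have hdeg : ((X + C h) ^ n).natDegree = n := by
    rw [(monic_X_add_C h).natDegree_pow, natDegree_X_add_C, mul_one]
  have hpos : 0 < ((X + C h) ^ n).degree :=
    natDegree_pos_iff_degree_pos.1 (by omega)
  rw [← Submodule.span_range_natDegree_eq_adjoin
    (hmonic.sub_of_left (degree_C_le.trans_lt hpos) : ((X + C h) ^ n - C c).Monic)
    (x := x) (by simp [hx]), natDegree_sub_C, hdeg]
  congr 1
  ext z
  simp [Fin.exists_iff]

theorem span_range_pow_mul_pow_eq_adjoin [Nontrivial R] {x y : A} {c d h k : R} {m n : ℕ}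
    (hm : m ≠ 0) (hn : n ≠ 0) (hx : (x + algebraMap R A h) ^ m = algebraMap R A c)
    (hy : (y + algebraMap R A k) ^ n = algebraMap R A d) :
    Submodule.span R (Set.range fun ij : Fin m × Fin n ↦ x ^ (ij.1 : ℕ) * y ^ (ij.2 : ℕ)) =
      Subalgebra.toSubmodule (Algebra.adjoin R {x, y}) := by
  rw [Set.insert_eq, Algebra.adjoin_union_coe_submodule, ← span_range_pow_eq_adjoin hm hx,
    ← span_range_pow_eq_adjoin hn hy, Submodule.span_mul_span]
  congr 1
  ext z
  simp [Set.mem_mul]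

theorem adjoin_pair_sub_algebraMap (x y : A) (h k : R) :
    Algebra.adjoin R {x - algebraMap R A h, y - algebraMap R A k} = Algebra.adjoin R {x, y} := by
  refine le_antisymm (Algebra.adjoin_le ?_) (Algebra.adjoin_le ?_)
  · exact Set.pair_subset (sub_mem (Algebra.subset_adjoin (.inl rfl)) (algebraMap_mem _ h))
      (sub_mem (Algebra.subset_adjoin (.inr rfl)) (algebraMap_mem _ k))
  · set T := Algebra.adjoin R {x - algebraMap R A h, y - algebraMap R A k}
    refine Set.pair_subset ?_ ?_
    · exact sub_add_cancel x (algebraMap R A h) ▸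
        add_mem (Algebra.subset_adjoin (.inl rfl)) (algebraMap_mem T h)
    · exact sub_add_cancel y (algebraMap R A k) ▸
        add_mem (Algebra.subset_adjoin (.inr rfl)) (algebraMap_mem T k)

end Span

section IsBiradicalExtension

/-- The field `K = L(ω, μ)` has the largest possible degree `p ^ 2` over `L`, where `ω` and `μ` are
`p`-th roots of the elements `f` and `g` of `S`. The base `S` is recorded through `f` and `g`. -/
structure IsBiradicalExtension {S : Type*} (L : Type*) {K : Type*} [CommRing S] [Field L] [Field K]
    [Algebra L K] [Algebra S K] (p : ℕ) (f g : S) (ω μ : K) : Prop where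
  left_pow : ω ^ p = algebraMap S K f
  right_pow : μ ^ p = algebraMap S K g
  adjoin_eq_top : Algebra.adjoin L {ω, μ} = ⊤
  finrank_eq : Module.finrank L K = p ^ 2

variable {S L K : Type*} [CommRing S] [Field L] [Field K] [Algebra L K] [Algebra S K] {p : ℕ}
  {f g : S} {ω μ : K}

theorem IsBiradicalExtension.symm (hK : IsBiradicalExtension L p f g ω μ) :
    IsBiradicalExtension L p g f μ ω :=
  ⟨hK.right_pow, hK.left_pow, Set.pair_comm ω μ ▸ hK.adjoin_eq_top, hK.finrank_eq⟩

theorem IsBiradicalExtension.finiteDimensional (hK : IsBiradicalExtension L p f g ω μ)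
    (hp : 0 < p) : FiniteDimensional L K :=
  Module.finite_of_finrank_pos (hK.finrank_eq ▸ pow_pos hp 2)

variable [Algebra S L] [IsScalarTower S L K]

theorem IsBiradicalExtension.exists_basis_eq_pow_mul_pow (hK : IsBiradicalExtension L p f g ω μ)
    (hp : 0 < p) :
    ∃ B : Module.Basis (Fin p × Fin p) L K, ∀ ij, B ij = ω ^ (ij.1 : ℕ) * μ ^ (ij.2 : ℕ) := by
  have hspan := span_range_pow_mul_pow_eq_adjoin (x := ω) (y := μ) (h := 0) (k := 0)
    (c := algebraMap S L f) (d := algebraMap S L g) hp.ne' hp.ne'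
    (by rw [map_zero, add_zero, hK.left_pow, ← IsScalarTower.algebraMap_apply])
    (by rw [map_zero, add_zero, hK.right_pow, ← IsScalarTower.algebraMap_apply])
  rw [hK.adjoin_eq_top, Algebra.top_toSubmodule] at hspan
  refine ⟨basisOfTopLeSpanOfCardEqFinrank _ hspan.ge ?_, fun ij ↦ by
    rw [coe_basisOfTopLeSpanOfCardEqFinrank]⟩
  rw [hK.finrank_eq, Fintype.card_prod, Fintype.card_fin, sq]

variable [IsDomain S] [IsNoetherianRing S] [IsIntegrallyClosed S] [IsFractionRing S L] [CharZero L]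

theorem IsBiradicalExtension.sq_smul_mem_span_image (hp : p.Prime)
    (hK : IsBiradicalExtension L p f g ω μ) (hf0 : f ≠ 0) (hg0 : g ≠ 0) (hf : PaperSquarefree f)
    (hg : PaperSquarefree g) (hfg : SatisfiesA1 f g) (B : Module.Basis (Fin p × Fin p) L K)
    (hB : ∀ ij, B ij = ω ^ (ij.1 : ℕ) * μ ^ (ij.2 : ℕ)) {x : K} (hx : IsIntegral S x)
    {s : Set (Fin p × Fin p)} (hxs : x ∈ Submodule.span L (B '' s)) :
    (p : S) ^ 2 • x ∈ Submodule.span S (B '' s) := by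
  have := hK.finiteDimensional hp.pos
  refine smul_mem_span_image_of_isIntegral_mul_repr B (fun ij ↦ ?_) hxs
  have hBp (kl : Fin p × Fin p) :
      B kl ^ p = algebraMap S K (f ^ (kl.1 : ℕ) * g ^ (kl.2 : ℕ)) := by
    rw [hB, map_mul, map_pow, map_pow, ← hK.left_pow, ← hK.right_pow]
    ring
  exact isIntegral_of_isIntegral_pow_mul_pow_smul_pow hf0 hg0 hf hg hfg ij.1.2 ij.2.2
    (isIntegral_smul_pow_repr hp hK.finrank_eq B hBp hx ij)

theorem IsBiradicalExtension.sq_smul_mem_adjoin_pair (hp : p.Prime)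
    (hK : IsBiradicalExtension L p f g ω μ) (hf0 : f ≠ 0) (hg0 : g ≠ 0) (hf : PaperSquarefree f)
    (hg : PaperSquarefree g) (hfg : SatisfiesA1 f g) {x : K} (hx : IsIntegral S x) :
    (p : S) ^ 2 • x ∈ Algebra.adjoin S {ω, μ} := by
  obtain ⟨B, hB⟩ := hK.exists_basis_eq_pow_mul_pow hp.pos
  have hmem := hK.sq_smul_mem_span_image hp hf0 hg0 hf hg hfg B hB hx (s := Set.univ)
    (by simp [B.span_eq])
  refine (Submodule.span_le (p := Subalgebra.toSubmodule (Algebra.adjoin S {ω, μ}))).2 ?_ hmem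
  rintro _ ⟨ij, -, rfl⟩
  rw [SetLike.mem_coe, Subalgebra.mem_toSubmodule, hB]
  exact mul_mem (pow_mem (Algebra.subset_adjoin (.inl rfl)) _)
    (pow_mem (Algebra.subset_adjoin (.inr rfl)) _)

theorem IsBiradicalExtension.sq_smul_mem_adjoin_left (hp : p.Prime)
    (hK : IsBiradicalExtension L p f g ω μ) (hf0 : f ≠ 0) (hg0 : g ≠ 0) (hf : PaperSquarefree f)
    (hg : PaperSquarefree g) (hfg : SatisfiesA1 f g) {x : K} (hx : IsIntegral S x)
    (hxω : x ∈ Algebra.adjoin L {ω}) : (p : S) ^ 2 • x ∈ Algebra.adjoin S {ω} := by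
  obtain ⟨B, hB⟩ := hK.exists_basis_eq_pow_mul_pow hp.pos
  let s : Set (Fin p × Fin p) := {ij | (ij.2 : ℕ) = 0}
  have hxs : x ∈ Submodule.span L (B '' s) := by
    have hspan := span_range_pow_eq_adjoin (x := ω) (h := 0) (c := algebraMap S L f) hp.ne_zero
      (by rw [map_zero, add_zero, hK.left_pow, ← IsScalarTower.algebraMap_apply])
    refine Submodule.span_mono ?_ (hspan.ge hxω)
    rintro _ ⟨i, rfl⟩
    exact ⟨(i, ⟨0, hp.pos⟩), rfl, by rw [hB, pow_zero, mul_one]⟩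
  refine (Submodule.span_le (p := Subalgebra.toSubmodule (Algebra.adjoin S {ω}))).2 ?_
    (hK.sq_smul_mem_span_image hp hf0 hg0 hf hg hfg B hB hx hxs)
  rintro _ ⟨ij, hij : (ij.2 : ℕ) = 0, rfl⟩
  rw [SetLike.mem_coe, Subalgebra.mem_toSubmodule, hB, hij, pow_zero, mul_one]
  exact pow_mem (Algebra.self_mem_adjoin_singleton S ω) _

end IsBiradicalExtension

section PthPowers

variable {R : Type*} [CommRing R] {p : ℕ}

theorem exists_add_pow_eq_add_mul_add (hp : p.Prime) (t h : R) :
    ∃ q, (t + h) ^ p = t ^ p + h ^ p + p * t * (h ^ (p - 1) + t * q) := by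
  obtain ⟨m, rfl⟩ : ∃ m, p = m + 2 := ⟨p - 2, (Nat.sub_add_cancel hp.two_le).symm⟩
  have hdvd : ((m + 2 : ℕ) : R) * t ^ 2 ∣
      ∑ k ∈ Finset.range m, t ^ (k + 2) * h ^ (m + 2 - (k + 2)) * ((m + 2).choose (k + 2) : R) := by
    refine Finset.dvd_sum fun k hk ↦ ?_
    have hchoose : m + 2 ∣ (m + 2).choose (k + 2) :=
      hp.dvd_choose_self (by omega) (by have := Finset.mem_range.1 hk; omega)
    rw [mul_comm]
    exact mul_dvd_mul ((pow_dvd_pow t (Nat.le_add_left 2 k)).mul_right _)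
      (Nat.cast_dvd_cast hchoose)
  obtain ⟨q, hq⟩ := hdvd
  refine ⟨q, ?_⟩
  rw [add_pow, Finset.sum_range_succ, Finset.sum_range_succ', Finset.sum_range_succ', hq]
  simp only [Nat.cast_add, Nat.cast_ofNat, zero_add, pow_one, Nat.add_one_sub_one,
    Nat.choose_one_right, pow_zero, tsub_zero, one_mul, Nat.choose_zero_right, Nat.cast_one,
    mul_one, tsub_self, Nat.choose_self]
  ring

variable [IsDomain R]

open Polynomial in
theorem dvd_of_pow_add_mul_eq [IsIntegrallyClosed R] {l t e w : R} {n : ℕ} (hn : 2 ≤ n) (hl : l ≠ 0)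
    (h : t ^ n + l ^ (n - 1) * t * e = l ^ n * w) : l ∣ t := by
  let F := FractionRing R
  have hlF : algebraMap R F l ≠ 0 := by rwa [Ne, map_eq_zero_iff _ (IsFractionRing.injective R F)]
  obtain ⟨y, hy⟩ : ∃ y, algebraMap R F t = algebraMap R F l * y :=
    ⟨algebraMap R F t / algebraMap R F l, (mul_div_cancel₀ _ hlF).symm⟩
  have hroot : y ^ n + (algebraMap R F e * y + algebraMap R F (-w)) = 0 := by
    have hF := congr_arg (algebraMap R F) h
    simp only [map_add, map_mul, map_pow, hy] at hF
    refine (mul_eq_zero.1 ?_).resolve_left (pow_ne_zero n hlF)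
    rw [map_neg]
    linear_combination hF +
      algebraMap R F e * y * (pow_sub_one_mul (by omega : n ≠ 0) (algebraMap R F l)).symm
  have hint : IsIntegral R y := by
    refine ⟨X ^ n + (C e * X + C (-w)), monic_X_pow_add (degree_linear_le.trans_lt ?_), ?_⟩
    · exact_mod_cast (by omega : 1 < n)
    · simpa using hroot
  obtain ⟨z, rfl⟩ := IsIntegrallyClosed.isIntegral_iff.1 hint
  exact ⟨z, IsFractionRing.injective R F (by rw [hy, map_mul])⟩

theorem dvd_of_add_pow_eq_add_sq_mul [IsIntegrallyClosed R] (hp : p.Prime) {l t h a : R}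
    (hl0 : l ≠ 0) (hl : l ^ (p - 1) = p) (h_pow : (t + h) ^ p = h ^ p + p ^ 2 * a) : l ∣ t := by
  obtain ⟨q, hq⟩ := exists_add_pow_eq_add_mul_add hp t h
  refine dvd_of_pow_add_mul_eq hp.two_le hl0 (e := h ^ (p - 1) + t * q) (w := l ^ (p - 2) * a) ?_
  have hsq : l ^ p * l ^ (p - 2) = (p : R) ^ 2 := by
    have := hp.two_le
    rw [← hl, ← pow_add, ← pow_mul]
    congr 1
    omega
  rw [hl]
  linear_combination h_pow - hq - a * hsq

theorem dvd_pow_sub_one_of_add_pow_eq (hp : p.Prime) {l d u : R} (hl0 : l ≠ 0)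
    (hl : l ^ (p - 1) = p) (hd : d ≠ 0) (h_pow : (l * d + u) ^ p = u ^ p) : d ∣ u ^ (p - 1) := by
  obtain ⟨q, hq⟩ := exists_add_pow_eq_add_mul_add hp (l * d) u
  have hfactor : l ^ p * d * (d ^ (p - 1) + (u ^ (p - 1) + l * d * q)) = 0 := by
    have hpl : l ^ p = p * l := by rw [← hl, pow_sub_one_mul hp.ne_zero]
    rw [h_pow, mul_pow, ← pow_sub_one_mul hp.ne_zero d] at hq
    linear_combination -hq + d * (u ^ (p - 1) + l * d * q) * hpl
  have hzero := (mul_eq_zero.1 hfactor).resolve_left (mul_ne_zero (pow_ne_zero p hl0) hd)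
  have hd_dvd : d ∣ d ^ (p - 1) := dvd_pow_self d (Nat.sub_ne_zero_of_lt hp.one_lt)
  have : u ^ (p - 1) = -(d ^ (p - 1) + l * d * q) := by linear_combination hzero
  rw [this, dvd_neg]
  exact dvd_add hd_dvd ⟨l * q, by ring⟩

theorem exists_eq_mul_and_dvd_of_add_pow_eq [IsIntegrallyClosed R] (hp : p.Prime) {l t h a : R}
    (hl0 : l ≠ 0) (hl : l ^ p = p) (h_pow : (t + h) ^ p = h ^ p + p * a) :
    ∃ y, t = l * y ∧ y ∣ a := by
  obtain ⟨q, hq⟩ := exists_add_pow_eq_add_mul_add hp t h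
  have ht : t ^ p = l ^ p * (a - t * (h ^ (p - 1) + t * q)) := by
    rw [hl]
    linear_combination h_pow - hq
  obtain ⟨y, rfl⟩ := (IsIntegrallyClosed.pow_dvd_pow_iff hp.ne_zero).1 (Dvd.intro _ ht.symm)
  rw [mul_pow] at ht
  have ha := mul_left_cancel₀ (pow_ne_zero p hl0) ht
  refine ⟨y, rfl, ?_⟩
  rw [← sub_add_cancel a (l * y * (h ^ (p - 1) + l * y * q)), ← ha]
  exact dvd_add (dvd_pow_self y hp.ne_zero) ⟨l * (h ^ (p - 1) + l * y * q), by ring⟩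

end PthPowers

section LinearIndependentMod

variable {S K ι : Type*} [CommRing S] [Field K] [Algebra S K] [Fintype ι]

/-- The family `b` is linearly independent modulo `q` in the integral closure of `S` in `K`: the
only `S`-combinations of `b` lying in `q` times the integral closure are those whose coefficients
are all divisible by `q`. Together with the fact that some `q ^ n` times the integral closure is
contained in the span of `b`, this shows that `b` spans the integral closure. -/
def LinearIndependentMod (q : S) (b : ι → K) : Prop :=
  ∀ (c : ι → S) (y : K), IsIntegral S y → ∑ i, c i • b i = q • y → ∀ i, q ∣ c i

theorem LinearIndependentMod.mem_span_of_pow_smul_mem {q : S} {b : ι → K}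
    (hb : LinearIndependentMod q b) (hq : algebraMap S K q ≠ 0) (n : ℕ) {x : K}
    (hx : IsIntegral S x) (h : q ^ n • x ∈ Submodule.span S (Set.range b)) :
    x ∈ Submodule.span S (Set.range b) := by
  induction n with
  | zero => simpa using h
  | succ n ih =>
    refine ih ?_
    obtain ⟨c, hc⟩ := (Submodule.mem_span_range_iff_exists_fun S).1 h
    rw [pow_succ', mul_smul] at hc
    choose d hd using hb c _ (hx.smul (q ^ n)) hc
    refine (Submodule.mem_span_range_iff_exists_fun S).2 ⟨d, mul_left_cancel₀ hq ?_⟩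
    rw [← Algebra.smul_def, ← Algebra.smul_def, ← hc, Finset.smul_sum]
    exact Finset.sum_congr rfl fun i _ ↦ by rw [smul_smul, ← hd i]

theorem integralClosure_free_and_finrank_eq_card [Nontrivial S] {b : ι → K}
    (hb : LinearIndependent S b) (hint : ∀ i, IsIntegral S (b i))
    (hspan : ∀ x, IsIntegral S x → x ∈ Submodule.span S (Set.range b)) :
    Module.Free S (integralClosure S K) ∧
      Module.finrank S (integralClosure S K) = Fintype.card ι := by
  let b' (i : ι) : integralClosure S K := ⟨b i, hint i⟩
  have hb' : LinearIndependent S b' := hb.of_comp (integralClosure S K).val.toLinearMap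
  have hspan' : ⊤ ≤ Submodule.span S (Set.range b') := fun x _ ↦ by
    obtain ⟨c, hc⟩ := (Submodule.mem_span_range_iff_exists_fun S).1 (hspan x x.2)
    exact (Submodule.mem_span_range_iff_exists_fun S).2 ⟨c, Subtype.ext (by simpa [b'] using hc)⟩
  let B := Module.Basis.mk hb' hspan'
  exact ⟨.of_basis B, Module.finrank_eq_card_basis B⟩

theorem linearIndependent_of_isIntegral_mem_span {L : Type*} [IsDomain S] [Field L] [Algebra S L]
    [IsFractionRing S L] [Algebra L K] [IsScalarTower S L K] [FiniteDimensional L K] {b : ι → K}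
    (hspan : ∀ x, IsIntegral S x → x ∈ Submodule.span S (Set.range b))
    (hcard : Fintype.card ι = Module.finrank L K) : LinearIndependent S b := by
  rw [LinearIndependent.iff_fractionRing S L]
  refine linearIndependent_of_top_le_span_of_card_eq_finrank (fun x _ ↦ ?_) hcard
  have hxL : IsIntegral L x := .of_finite L x
  obtain ⟨s, hs⟩ := hxL.exists_multiple_integral_of_isLocalization (nonZeroDivisors S) x
  have hs0 : algebraMap S L s ≠ 0 := IsFractionRing.to_map_ne_zero_of_mem_nonZeroDivisors s.2
  have hx : x = (algebraMap S L s)⁻¹ • ((s : S) • x) := by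
    rw [← algebraMap_smul L (s : S) x, inv_smul_smul₀ hs0]
  rw [hx]
  exact Submodule.smul_mem _ _ (Submodule.span_subset_span S L _ (hspan _ hs))

end LinearIndependentMod

section WeightedSums

variable {R ι Z : Type*} [CommRing R] [IsDomain R] [Fintype ι] {P : Ideal R} {ρ : R} {N : ℕ}

/- Induction on `e i`: dividing out `ρ ^ r`, the terms of weight `r` add up to an element of `P`,
since those of smaller weight are divisible by `ρ ^ N` and those of larger weight by
`ρ ^ (r + 1)`. -/
theorem mem_of_pow_dvd_sum_mul_pow_mul (hρ0 : ρ ≠ 0) (hρ : ρ ∈ P) {c : ι → R} {e : ι → ℕ}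
    {φ : Z → ι → R} (he : ∀ i, e i < N) (hc : ∀ i, c i ∈ P → ρ ^ N ∣ c i)
    (hsum : ∀ z, ρ ^ N ∣ ∑ i, c i * (ρ ^ e i * φ z i))
    (hφ : ∀ (r : ℕ) (d : ι → R), (∀ z, ∑ i with e i = r, d i * φ z i ∈ P) →
      ∀ i, e i = r → d i ∈ P) (i : ι) : c i ∈ P := by
  suffices ∀ r i, e i = r → c i ∈ P from this _ i rfl
  intro r
  induction r using Nat.strong_induction_on with
  | h r ih =>
  by_cases hr : r < N
  swap
  · exact fun i hi ↦ absurd (he i) (hi ▸ hr)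
  refine hφ r c fun z ↦ ?_
  have hrest : ρ ^ (r + 1) ∣ ∑ i with ¬ e i = r, c i * (ρ ^ e i * φ z i) := by
    refine Finset.dvd_sum fun i hi ↦ ?_
    rcases lt_or_gt_of_ne (Finset.mem_filter.1 hi).2 with hlt | hgt
    · exact ((pow_dvd_pow ρ hr).trans (hc i (ih _ hlt i rfl))).mul_right _
    · exact ((pow_dvd_pow ρ hgt).mul_right _).mul_left _
  have hmain : ρ ^ r * ρ ∣ ρ ^ r * ∑ i with e i = r, c i * φ z i := by
    rw [← pow_succ, Finset.mul_sum]
    have htotal := (pow_dvd_pow ρ hr).trans (hsum z)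
    rw [← Finset.sum_filter_add_sum_filter_not _ (e · = r), dvd_add_left hrest] at htotal
    refine htotal.trans (dvd_of_eq (Finset.sum_congr rfl fun i hi ↦ ?_))
    rw [(Finset.mem_filter.1 hi).2]
    ring
  exact P.mem_of_dvd ((mul_dvd_mul_iff_left (pow_ne_zero r hρ0)).1 hmain) hρ

end WeightedSums

section Vandermonde

variable {R : Type*} [CommRing R] {P : Ideal R} [P.IsPrime] {m n : ℕ}

theorem mem_of_forall_sum_mul_pow_mem {x : Fin n → R}
    (hx : Function.Injective (Ideal.Quotient.mk P ∘ x)) {d : Fin n → R}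
    (hd : ∀ k, ∑ i, d i * x k ^ (i : ℕ) ∈ P) (i : Fin n) : d i ∈ P := by
  have hzero : Ideal.Quotient.mk P ∘ d = 0 := by
    refine Matrix.eq_zero_of_forall_index_sum_mul_pow_eq_zero hx fun k ↦ ?_
    simpa using Ideal.Quotient.eq_zero_iff_mem.2 (hd k)
  exact Ideal.Quotient.eq_zero_iff_mem.1 (congr_fun hzero i)

theorem mem_of_forall_sum_mul_pow_mul_pow_mem {x : Fin m → R} {y : Fin n → R}
    (hx : Function.Injective (Ideal.Quotient.mk P ∘ x))
    (hy : Function.Injective (Ideal.Quotient.mk P ∘ y)) {d : Fin m × Fin n → R}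
    (hd : ∀ k l, ∑ ij, d ij * (x k ^ (ij.1 : ℕ) * y l ^ (ij.2 : ℕ)) ∈ P) (ij : Fin m × Fin n) :
    d ij ∈ P := by
  refine mem_of_forall_sum_mul_pow_mem hy (d := fun j ↦ d (ij.1, j)) (fun l ↦ ?_) ij.2
  refine mem_of_forall_sum_mul_pow_mem hx (d := fun i ↦ ∑ j, d (i, j) * y l ^ (j : ℕ)) (fun k ↦ ?_)
    ij.1
  convert hd k l using 1
  rw [Fintype.sum_prod_type]
  refine Finset.sum_congr rfl fun i _ ↦ ?_
  rw [Finset.sum_mul]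
  exact Finset.sum_congr rfl fun j _ ↦ by ring

end Vandermonde

/- Modulo `p`, the number `p * i + (p - 1) * j` is congruent to `-j`. -/
theorem eq_of_mul_add_pred_mul_mod_eq {p i j k l : ℕ} (hj : j < p) (hl : l < p)
    (h : (p * i + (p - 1) * j) % (p * (p - 1)) = (p * k + (p - 1) * l) % (p * (p - 1))) :
    j = l := by
  have hsplit (m : ℕ) : (p - 1) * m + m = p * m := by
    rw [← Nat.succ_mul, Nat.succ_eq_add_one, Nat.sub_add_cancel (by omega)]
  have hmod : p * (i + j) + l ≡ p * (k + l) + j [MOD p] := by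
    convert (Nat.ModEq.of_mul_right (p - 1) h).add_right (j + l) using 1
    · linear_combination -hsplit j
    · linear_combination -hsplit l
  simpa [Nat.ModEq, Nat.mod_eq_of_lt hj, Nat.mod_eq_of_lt hl, eq_comm] using hmod

section Criterion

variable {S K Ω C : Type*} [CommRing S] [Field K] [Algebra S K] [Field Ω] [Algebra S Ω]
  [CommRing C] [Algebra S C] [Algebra C Ω] [IsScalarTower S C Ω] [IsIntegralClosure C S Ω]

theorem linearIndependentMod_of_algHom [IsDomain C] {ι Z : Type*} [Fintype ι] {P : Ideal C} {q : S}
    (hP : ∀ s, algebraMap S C s ∈ P → q ∣ s) {ρ : C} (hρ0 : ρ ≠ 0) (hρ : ρ ∈ P) {N : ℕ}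
    (hρN : ρ ^ N = algebraMap S C q) {b : ι → K} {e : ι → ℕ} (he : ∀ i, e i < N)
    {σ : Z → K →ₐ[S] Ω} {φ : Z → ι → C}
    (hσ : ∀ z i, σ z (b i) = algebraMap C Ω (ρ ^ e i * φ z i))
    (hφ : ∀ (r : ℕ) (d : ι → C), (∀ z, ∑ i with e i = r, d i * φ z i ∈ P) →
      ∀ i, e i = r → d i ∈ P) : LinearIndependentMod q b := by
  intro c y hy hc i
  refine hP _ (mem_of_pow_dvd_sum_mul_pow_mul (c := fun i ↦ algebraMap S C (c i)) hρ0 hρ he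
    (fun i hi ↦ hρN ▸ map_dvd (algebraMap S C) (hP _ hi)) (fun z ↦ ?_) hφ i)
  obtain ⟨w, hw⟩ := IsIntegralClosure.isIntegral_iff (A := C).1 (hy.map (σ z))
  refine ⟨w, IsIntegralClosure.algebraMap_injective C S Ω ?_⟩
  have hz := congr_arg (σ z) hc
  rw [map_sum, map_smul, ← hw, Algebra.smul_def] at hz
  rw [hρN, map_mul, ← IsScalarTower.algebraMap_apply, ← hz, map_sum]
  refine Finset.sum_congr rfl fun i _ ↦ ?_
  rw [map_mul, ← hσ, map_smul, Algebra.smul_def, IsScalarTower.algebraMap_apply S C Ω]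

theorem linearIndependentMod_pow_of_algHom [IsDomain C] {P : Ideal C} [P.IsPrime] {q : S}
    (hP : ∀ s, algebraMap S C s ∈ P → q ∣ s) {ρ : C} (hρ0 : ρ ≠ 0) (hρ : ρ ∈ P) {N : ℕ}
    (hρN : ρ ^ N = algebraMap S C q) {t : K} (σ : K →ₐ[S] Ω) {x : C} (hx : x ∉ P)
    (hσ : σ t = algebraMap C Ω (ρ * x)) : LinearIndependentMod q fun i : Fin N ↦ t ^ (i : ℕ) := by
  refine linearIndependentMod_of_algHom hP hρ0 hρ hρN Fin.is_lt (σ := fun _ : Unit ↦ σ)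
    (φ := fun _ i ↦ x ^ (i : ℕ)) (fun _ i ↦ ?_) fun r d hd i hi ↦ ?_
  · rw [map_pow, hσ, ← map_pow, mul_pow]
  · have hsum := hd ()
    rw [Finset.sum_eq_single i (fun j hj hji ↦ (hji (Fin.ext ((Finset.mem_filter.1 hj).2.trans
      hi.symm))).elim) (by simp [hi])] at hsum
    exact (Ideal.IsPrime.mem_or_mem ‹_› hsum).resolve_right fun h ↦
      hx (Ideal.IsPrime.mem_of_pow_mem ‹_› _ h)

/-- The elements `t ^ i * s ^ j / q ^ ⌊(A * i + B * j) / N⌋` for `i, j < p`. They are candidates for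
a basis of an integral closure when, for an `N`-th root `ρ` of `q`, the elements `t` and `s` are
divisible by `ρ ^ A` and `ρ ^ B`. -/
def scaledMonomial (q t s : K) (p A B N : ℕ) (ij : Fin p × Fin p) : K :=
  t ^ (ij.1 : ℕ) * s ^ (ij.2 : ℕ) / q ^ ((A * ij.1 + B * ij.2) / N)

theorem algHom_scaledMonomial {ρ : C} (hρ0 : ρ ≠ 0) {q : S} {p A B N : ℕ}
    (hρN : ρ ^ N = algebraMap S C q) {t s : K} (σ : K →ₐ[S] Ω) {x y : C}
    (ht : σ t = algebraMap C Ω (ρ ^ A * x)) (hs : σ s = algebraMap C Ω (ρ ^ B * y))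
    (ij : Fin p × Fin p) :
    σ (scaledMonomial (algebraMap S K q) t s p A B N ij) =
      algebraMap C Ω (ρ ^ ((A * ij.1 + B * ij.2) % N) * (x ^ (ij.1 : ℕ) * y ^ (ij.2 : ℕ))) := by
  have hρΩ : algebraMap C Ω ρ ≠ 0 := by
    rwa [Ne, map_eq_zero_iff _ (IsIntegralClosure.algebraMap_injective C S Ω)]
  have hq : algebraMap S Ω q = algebraMap C Ω ρ ^ N := by
    rw [← map_pow, hρN, ← IsScalarTower.algebraMap_apply]
  rw [scaledMonomial, map_div₀, map_pow, σ.commutes, hq, map_mul, map_pow, map_pow, ht, hs,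
    div_eq_iff (pow_ne_zero _ (pow_ne_zero _ hρΩ))]
  have hsplit := Nat.mod_add_div (A * ij.1 + B * ij.2) N
  simp only [map_mul, map_pow, mul_pow, ← pow_mul]
  set w := (A * ij.1 + B * ij.2) % N
  set v := (A * ij.1 + B * ij.2) / N
  have hweight : algebraMap C Ω ρ ^ w * algebraMap C Ω ρ ^ (N * v) =
      algebraMap C Ω ρ ^ (A * ij.1) * algebraMap C Ω ρ ^ (B * ij.2) := by
    rw [← pow_add, hsplit, pow_add]
  linear_combination -algebraMap C Ω x ^ (ij.1 : ℕ) * algebraMap C Ω y ^ (ij.2 : ℕ) * hweight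

theorem isIntegral_scaledMonomial {ρ : C} (hρ0 : ρ ≠ 0) {q : S} {p A B N : ℕ}
    (hρN : ρ ^ N = algebraMap S C q) {t s : K} (σ : K →ₐ[S] Ω) {x y : C}
    (ht : σ t = algebraMap C Ω (ρ ^ A * x)) (hs : σ s = algebraMap C Ω (ρ ^ B * y))
    (ij : Fin p × Fin p) :
    IsIntegral S (scaledMonomial (algebraMap S K q) t s p A B N ij) := by
  rw [← isIntegral_algHom_iff σ σ.injective, algHom_scaledMonomial hρ0 hρN σ ht hs,
    IsIntegralClosure.isIntegral_iff (A := C)]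
  exact ⟨_, rfl⟩

variable [IsDomain C] {P : Ideal C} [P.IsPrime]

theorem linearIndependentMod_scaledMonomial_one_one {p : ℕ} (hp : 1 < p) {q : S}
    (hP : ∀ s, algebraMap S C s ∈ P → q ∣ s) {ρ : C} (hρ0 : ρ ≠ 0) (hρ : ρ ∈ P)
    (hρp : ρ ^ (p - 1) = algebraMap S C q) {t s : K} (σ : Fin p → Fin p → K →ₐ[S] Ω)
    {x y : Fin p → C} (hx : Function.Injective (Ideal.Quotient.mk P ∘ x))
    (hy : Function.Injective (Ideal.Quotient.mk P ∘ y))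
    (ht : ∀ k l, σ k l t = algebraMap C Ω (ρ * x k))
    (hs : ∀ k l, σ k l s = algebraMap C Ω (ρ * y l)) :
    LinearIndependentMod q (scaledMonomial (algebraMap S K q) t s p 1 1 (p - 1)) := by
  refine linearIndependentMod_of_algHom hP hρ0 hρ hρp
    (e := fun ij ↦ (1 * ij.1 + 1 * ij.2) % (p - 1)) (fun _ ↦ Nat.mod_lt _ (by omega))
    (σ := fun kl : Fin p × Fin p ↦ σ kl.1 kl.2)
    (φ := fun kl ij ↦ x kl.1 ^ (ij.1 : ℕ) * y kl.2 ^ (ij.2 : ℕ))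
    (fun kl ij ↦ algHom_scaledMonomial hρ0 hρp _ (by rw [ht, pow_one]) (by rw [hs, pow_one]) ij)
    fun r d hd ij hij ↦ ?_
  have := mem_of_forall_sum_mul_pow_mul_pow_mem hx hy
    (d := fun ij ↦ if (1 * ij.1 + 1 * ij.2 : ℕ) % (p - 1) = r then d ij else 0)
    (fun k l ↦ by simpa only [ite_mul, zero_mul, ← Finset.sum_filter] using hd (k, l)) ij
  rwa [if_pos hij] at this

theorem linearIndependentMod_scaledMonomial_prime_pred {p : ℕ} (hp : 1 < p) {q : S}
    (hP : ∀ s, algebraMap S C s ∈ P → q ∣ s) {ρ : C} (hρ0 : ρ ≠ 0) (hρ : ρ ∈ P)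
    (hρp : ρ ^ (p * (p - 1)) = algebraMap S C q) {t s : K} (σ : Fin p → K →ₐ[S] Ω)
    {x : Fin p → C} {y : C} (hx : Function.Injective (Ideal.Quotient.mk P ∘ x)) (hy : y ∉ P)
    (ht : ∀ k, σ k t = algebraMap C Ω (ρ ^ p * x k))
    (hs : ∀ k, σ k s = algebraMap C Ω (ρ ^ (p - 1) * y)) :
    LinearIndependentMod q (scaledMonomial (algebraMap S K q) t s p p (p - 1) (p * (p - 1))) := by
  let e (ij : Fin p × Fin p) : ℕ := (p * ij.1 + (p - 1) * ij.2) % (p * (p - 1))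
  have he_snd {ij kl : Fin p × Fin p} (h : e ij = e kl) : ij.2 = kl.2 :=
    Fin.ext (eq_of_mul_add_pred_mul_mod_eq ij.2.2 kl.2.2 h)
  refine linearIndependentMod_of_algHom hP hρ0 hρ hρp (e := e)
    (fun _ ↦ Nat.mod_lt _ (Nat.mul_pos (by omega) (by omega))) (σ := σ)
    (φ := fun k ij ↦ x k ^ (ij.1 : ℕ) * y ^ (ij.2 : ℕ))
    (fun k ij ↦ algHom_scaledMonomial hρ0 hρp _ (ht k) (hs k) ij) fun r d hd ij hij ↦ ?_
  have := mem_of_forall_sum_mul_pow_mem hx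
    (d := fun i ↦ if e (i, ij.2) = r then d (i, ij.2) else 0) (fun k ↦ ?_) ij.1
  · rwa [if_pos hij] at this
  · refine (Ideal.IsPrime.mem_or_mem ‹P.IsPrime› (?_ : y ^ (ij.2 : ℕ) * _ ∈ P)).resolve_left fun h ↦
      hy (Ideal.IsPrime.mem_of_pow_mem ‹_› _ h)
    convert hd k using 1
    rw [Finset.sum_filter, Fintype.sum_prod_type, Finset.mul_sum]
    refine Finset.sum_congr rfl fun i _ ↦ ?_
    rw [Finset.sum_eq_single ij.2 (fun j _ hj ↦ if_neg fun h ↦ hj (he_snd (h.trans hij.symm)))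
      (by simp)]
    split_ifs <;> ring

end Criterion

section Points

theorem exists_injective_mk_of_pow_eq {R ι : Type*} [CommRing R] [IsDomain R]
    [IsIntegrallyClosed R] {P : Ideal R} [P.IsPrime] {p : ℕ} (hp : p.Prime) (hpP : (p : R) ∈ P)
    {l h a : R} (hl0 : l ≠ 0) (hl : l ^ (p - 1) = p) (hh : h ∉ P) {v : ι → R}
    (hv : Function.Injective v) (hv_pow : ∀ k, v k ^ p = h ^ p + p ^ 2 * a) :
    ∃ x : ι → R, (∀ k, v k - h = l * x k) ∧ Function.Injective (Ideal.Quotient.mk P ∘ x) := by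
  have hdvd (k : ι) : l ∣ v k - h :=
    dvd_of_add_pow_eq_add_sq_mul hp hl0 hl (by rw [sub_add_cancel, hv_pow])
  choose x hx using hdvd
  have hvP (k : ι) : v k ∉ P := by
    intro hk
    refine hh (Ideal.IsPrime.mem_of_pow_mem ‹_› p ?_)
    rw [eq_sub_of_add_eq (hv_pow k).symm]
    exact sub_mem (P.pow_mem_of_mem hk p hp.pos)
      (P.mul_mem_right _ (P.pow_mem_of_mem hpP 2 two_pos))
  refine ⟨x, hx, fun k m hkm ↦ not_not.1 fun hne ↦ hvP m ?_⟩
  have hxP : x k - x m ∈ P := Ideal.Quotient.eq.1 hkm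
  have hxne : x k - x m ≠ 0 := fun h0 ↦ hne (hv (by
    linear_combination hx k - hx m + l * h0))
  refine Ideal.IsPrime.mem_of_pow_mem ‹_› (p - 1) (P.mem_of_dvd ?_ hxP)
  refine dvd_pow_sub_one_of_add_pow_eq hp hl0 hl hxne ?_
  rw [show l * (x k - x m) + v m = v k by linear_combination hx m - hx k, hv_pow, hv_pow]

theorem exists_ideal_isPrime_forall_mem_iff_dvd {S : Type*} (C : Type*) [CommRing S] [CommRing C]
    [IsDomain C] [Algebra S C] [FaithfulSMul S C] [Algebra.IsIntegral S C] {q : S} (hq : Prime q) :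
    ∃ P : Ideal C, P.IsPrime ∧ ∀ s, algebraMap S C s ∈ P ↔ q ∣ s := by
  have : (Ideal.span {q}).IsPrime := (Ideal.span_singleton_prime hq.ne_zero).2 hq
  obtain ⟨P, hP, hPq⟩ := Ideal.exists_ideal_over_prime_of_isIntegral_of_isDomain (S := C)
    (Ideal.span {q})
    ((RingHom.injective_iff_ker_eq_bot _).1 (FaithfulSMul.algebraMap_injective S C) ▸ bot_le)
  exact ⟨P, hP, fun s ↦ by rw [← Ideal.mem_comap, hPq, Ideal.mem_span_singleton]⟩

variable {S Ω : Type*} (C : Type*) [CommRing S] [Field Ω] [Algebra S Ω] [CommRing C] [Algebra S C]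
  [Algebra C Ω] [IsScalarTower S C Ω] [IsIntegralClosure C S Ω]

theorem exists_pow_eq_and_algebraMap_eq {n : ℕ} (hn : 0 < n) {c : S} {z : Ω}
    (hz : z ^ n = algebraMap S Ω c) : ∃ v : C, v ^ n = algebraMap S C c ∧ algebraMap C Ω v = z := by
  obtain ⟨v, rfl⟩ := (IsIntegralClosure.isIntegral_iff (A := C)).1
    (IsIntegral.of_pow hn (hz ▸ isIntegral_algebraMap))
  refine ⟨v, IsIntegralClosure.algebraMap_injective C S Ω ?_, rfl⟩
  rw [map_pow, hz, IsScalarTower.algebraMap_apply S C Ω]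

variable [IsAlgClosed Ω]

theorem exists_injective_pow_eq_algebraMap {n : ℕ} [NeZero (n : Ω)] {c : S}
    (hc : algebraMap S Ω c ≠ 0) :
    ∃ v : Fin n → C, Function.Injective v ∧ ∀ k, v k ^ n = algebraMap S C c := by
  have hn : 0 < n := Nat.pos_of_ne_zero fun h ↦ NeZero.ne (n : Ω) (by rw [h, Nat.cast_zero])
  have : NeZero n := ⟨hn.ne'⟩
  obtain ⟨ζ, hζ⟩ := HasEnoughRootsOfUnity.exists_primitiveRoot Ω n
  obtain ⟨z, hz⟩ := IsAlgClosed.exists_pow_nat_eq (algebraMap S Ω c) hn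
  have hz0 : z ≠ 0 := by
    rintro rfl
    exact hc (hz ▸ zero_pow hn.ne')
  have hroot (k : Fin n) : (ζ ^ (k : ℕ) * z) ^ n = algebraMap S Ω c := by
    rw [mul_pow, pow_right_comm, hζ.pow_eq_one, one_pow, one_mul, hz]
  choose v hv hvz using fun k ↦ exists_pow_eq_and_algebraMap_eq C hn (hroot k)
  refine ⟨v, fun k l hkl ↦ Fin.ext (hζ.pow_inj k.2 l.2 (mul_right_cancel₀ hz0 ?_)), hv⟩
  rw [← hvz, ← hvz, hkl]

theorem exists_injective_mk_mul_add_pow_eq [CharZero Ω] [IsDomain C] [IsIntegrallyClosed C]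
    {P : Ideal C} [P.IsPrime] {p : ℕ} (hp : p.Prime) (hpP : (p : C) ∈ P) {l : C} (hl0 : l ≠ 0)
    (hl : l ^ (p - 1) = p) {f h a : S} (hf : f = h ^ p + (p : S) ^ 2 * a)
    (hh : algebraMap S C h ∉ P) :
    ∃ x : Fin p → C, Function.Injective (Ideal.Quotient.mk P ∘ x) ∧
      ∀ k, (l * x k + algebraMap S C h) ^ p = algebraMap S C f := by
  have hfC : algebraMap S C f = algebraMap S C h ^ p + (p : C) ^ 2 * algebraMap S C a := by
    simp [hf]
  have hf0 : algebraMap S Ω f ≠ 0 := by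
    rw [IsScalarTower.algebraMap_apply S C Ω, Ne,
      map_eq_zero_iff _ (IsIntegralClosure.algebraMap_injective C S Ω)]
    intro h0
    refine hh (Ideal.IsPrime.mem_of_pow_mem ‹_› p ?_)
    rw [eq_sub_of_add_eq (hfC.symm.trans h0), zero_sub]
    exact neg_mem (P.mul_mem_right _ (P.pow_mem_of_mem hpP 2 two_pos))
  have : NeZero (p : Ω) := ⟨Nat.cast_ne_zero.2 hp.ne_zero⟩
  obtain ⟨v, hv, hvp⟩ := exists_injective_pow_eq_algebraMap (n := p) C hf0
  obtain ⟨x, hx, hx_inj⟩ :=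
    exists_injective_mk_of_pow_eq hp hpP hl0 hl hh hv fun k ↦ (hvp k).trans hfC
  exact ⟨x, hx_inj, fun k ↦ by rw [← hx, sub_add_cancel, hvp]⟩

end Points

section Embeddings

open Polynomial in
theorem exists_algHom_of_pow_eq {L K Ω : Type*} [Field L] [CharZero L] [Field K] [Algebra L K]
    [Field Ω] [Algebra L Ω] [IsAlgClosed Ω] {p : ℕ} (hp : 0 < p) {ω μ : K} {c d : L}
    (hω : ω ^ p = algebraMap L K c) (hμ : μ ^ p = algebraMap L K d)
    (hgen : Algebra.adjoin L {ω, μ} = ⊤) (hdeg : Module.finrank L K = p ^ 2) {x y : Ω}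
    (hx : x ^ p = algebraMap L Ω c) (hy : y ^ p = algebraMap L Ω d) :
    ∃ σ : K →ₐ[L] Ω, σ ω = x ∧ σ μ = y := by
  classical
  have : FiniteDimensional L K := Module.finite_of_finrank_pos (by rw [hdeg]; positivity)
  let X := nthRootsFinset p (algebraMap L Ω c)
  let Y := nthRootsFinset p (algebraMap L Ω d)
  have hX (z : Ω) : z ∈ X ↔ z ^ p = algebraMap L Ω c := mem_nthRootsFinset hp _
  have hY (z : Ω) : z ∈ Y ↔ z ^ p = algebraMap L Ω d := mem_nthRootsFinset hp _
  let conjugates (σ : K →ₐ[L] Ω) : Ω × Ω := (σ ω, σ μ)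
  have hmem : ∀ σ ∈ Finset.univ, conjugates σ ∈ X ×ˢ Y := fun σ _ ↦ Finset.mem_product.2
    ⟨(hX _).2 (by rw [← map_pow, hω, σ.commutes]), (hY _).2 (by rw [← map_pow, hμ, σ.commutes])⟩
  have hinj : Set.InjOn conjugates (Finset.univ : Finset (K →ₐ[L] Ω)) := fun σ _ τ _ h ↦ by
    refine AlgHom.ext_of_adjoin_eq_top hgen ?_
    rintro z (rfl | rfl)
    exacts [congr_arg Prod.fst h, congr_arg Prod.snd h]
  have card_nthRootsFinset_le (z : Ω) : (nthRootsFinset p z).card ≤ p := by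
    rw [nthRootsFinset_def]
    exact (Multiset.toFinset_card_le _).trans (card_nthRoots p z)
  have hcard : (X ×ˢ Y).card ≤ (Finset.univ : Finset (K →ₐ[L] Ω)).card := by
    rw [Finset.card_univ, AlgHom.card, hdeg, Finset.card_product, sq]
    exact Nat.mul_le_mul (card_nthRootsFinset_le _) (card_nthRootsFinset_le _)
  obtain ⟨σ, -, hσ⟩ := Finset.surjOn_of_injOn_of_card_le conjugates hmem hinj hcard
    (show (x, y) ∈ _ from Finset.mem_product.2 ⟨(hX x).2 hx, (hY y).2 hy⟩)
  exact ⟨σ, congr_arg Prod.fst hσ, congr_arg Prod.snd hσ⟩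

end Embeddings

section IntegralBasis

theorem exists_ideal_isPrime_and_pow_eq {S : Type*} (Ω : Type*) [CommRing S] [Field Ω] [Algebra S Ω]
    [FaithfulSMul S Ω] [IsAlgClosed Ω] {q : S} (hq : Prime q) {N : ℕ} (hN : 0 < N) :
    ∃ P : Ideal (integralClosure S Ω), P.IsPrime ∧ (∀ s, algebraMap S _ s ∈ P ↔ q ∣ s) ∧
      ∃ ρ ∈ P, ρ ≠ 0 ∧ ρ ^ N = algebraMap S _ q := by
  have : FaithfulSMul S (integralClosure S Ω) := .tower_bot S (integralClosure S Ω) Ω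
  obtain ⟨P, hP, hPq⟩ := exists_ideal_isPrime_forall_mem_iff_dvd (integralClosure S Ω) hq
  obtain ⟨z, hz⟩ := IsAlgClosed.exists_pow_nat_eq (algebraMap S Ω q) hN
  obtain ⟨ρ, hρ, -⟩ := exists_pow_eq_and_algebraMap_eq (integralClosure S Ω) hN hz
  refine ⟨P, hP, hPq, ρ, hP.mem_of_pow_mem N (hρ ▸ (hPq q).2 dvd_rfl), ?_, hρ⟩
  rintro rfl
  rw [zero_pow hN.ne', eq_comm, map_eq_zero_iff _ (FaithfulSMul.algebraMap_injective _ _)] at hρ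
  exact hq.ne_zero hρ

theorem isIntegrallyClosed_integralClosure (S Ω : Type*) [CommRing S] [Field Ω] [Algebra S Ω] :
    IsIntegrallyClosed (integralClosure S Ω) :=
  .of_isIntegrallyClosed_of_isIntegrallyClosedIn _ Ω

theorem linearIndependentMod_sub_pow {S K : Type*} [CommRing S] [Field K] [Algebra S K]
    [FaithfulSMul S K] {p : ℕ} (hp : p.Prime) (hpS : Prime (p : S)) {f h a : S}
    (hf : f = h ^ p + a * (p : S)) (ha : ¬ (p : S) ∣ a) {ω : K} (hω : ω ^ p = algebraMap S K f) :
    LinearIndependentMod (p : S) fun i : Fin p ↦ (ω - algebraMap S K h) ^ (i : ℕ) := by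
  let Ω := AlgebraicClosure K
  have : FaithfulSMul S Ω := .trans S K Ω
  have := isIntegrallyClosed_integralClosure S Ω
  obtain ⟨P, hP, hPp, ρ, hρ, hρ0, hρp⟩ := exists_ideal_isPrime_and_pow_eq Ω hpS hp.pos
  let σ := IsScalarTower.toAlgHom S K Ω
  obtain ⟨v, hv, hσω⟩ := exists_pow_eq_and_algebraMap_eq (integralClosure S Ω) hp.pos
    (show σ ω ^ p = algebraMap S Ω f by rw [← map_pow, hω, σ.commutes])
  obtain ⟨y, hy, hya⟩ := exists_eq_mul_and_dvd_of_add_pow_eq (t := v - algebraMap S _ h)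
    (h := algebraMap S _ h) (a := algebraMap S _ a) hp hρ0 (by simpa using hρp)
    (by rw [sub_add_cancel, hv, hf]; simp [mul_comm])
  refine linearIndependentMod_pow_of_algHom (fun s ↦ (hPp s).1) hρ0 hρ hρp σ (x := y) ?_ ?_
  · exact fun hyP ↦ ha ((hPp a).1 (P.mem_of_dvd hya hyP))
  · rw [map_sub, ← hσω, σ.commutes, ← hy, map_sub, ← IsScalarTower.algebraMap_apply]

variable {S L K : Type*} [CommRing S] [Field L] [CharZero L] [Algebra S L] [Field K]
  [Algebra L K] [Algebra S K] [IsScalarTower S L K] {p : ℕ} {f g h k : S} {ω μ : K}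

theorem exists_algHom_sub_eq_algebraMap {Ω C : Type*} [Field Ω] [IsAlgClosed Ω] [Algebra L Ω]
    [Algebra S Ω] [IsScalarTower S L Ω] [CommRing C] [Algebra S C] [Algebra C Ω]
    [IsScalarTower S C Ω] (hp : 0 < p) (hK : IsBiradicalExtension L p f g ω μ) {x y : C}
    (hx : (x + algebraMap S C h) ^ p = algebraMap S C f)
    (hy : (y + algebraMap S C k) ^ p = algebraMap S C g) :
    ∃ σ : K →ₐ[S] Ω, σ (ω - algebraMap S K h) = algebraMap C Ω x ∧
      σ (μ - algebraMap S K k) = algebraMap C Ω y := by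
  have hpow {z : C} {c : S} (hz : z ^ p = algebraMap S C c) :
      algebraMap C Ω z ^ p = algebraMap L Ω (algebraMap S L c) := by
    rw [← map_pow, hz, ← IsScalarTower.algebraMap_apply, ← IsScalarTower.algebraMap_apply]
  obtain ⟨σ, hσω, hσμ⟩ := exists_algHom_of_pow_eq hp
    (hK.left_pow.trans (IsScalarTower.algebraMap_apply S L K f))
    (hK.right_pow.trans (IsScalarTower.algebraMap_apply S L K g)) hK.adjoin_eq_top hK.finrank_eq
    (hpow hx) (hpow hy)
  have hcomm (c : S) : σ (algebraMap S K c) = algebraMap C Ω (algebraMap S C c) := by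
    rw [← IsScalarTower.algebraMap_apply]
    exact (σ.restrictScalars S).commutes c
  exact ⟨σ.restrictScalars S, by simp [hσω, hcomm], by simp [hσμ, hcomm]⟩

variable [FaithfulSMul S L]

theorem scaledMonomial_one_one_linearIndependentMod_and_isIntegral (hp : p.Prime)
    (hpS : Prime (p : S)) {a b : S} (hf : f = h ^ p + (p : S) ^ 2 * a)
    (hg : g = k ^ p + (p : S) ^ 2 * b) (hh : ¬ (p : S) ∣ h) (hk : ¬ (p : S) ∣ k)
    (hK : IsBiradicalExtension L p f g ω μ) :
    let β := scaledMonomial (algebraMap S K (p : S)) (ω - algebraMap S K h) (μ - algebraMap S K k)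
      p 1 1 (p - 1)
    LinearIndependentMod (p : S) β ∧ ∀ ij, IsIntegral S (β ij) := by
  let Ω := AlgebraicClosure K
  have : FaithfulSMul S Ω := .trans S L Ω
  have := isIntegrallyClosed_integralClosure S Ω
  have : CharZero Ω := charZero_of_injective_algebraMap (algebraMap L Ω).injective
  obtain ⟨P, hP, hPp, ρ, hρ, hρ0, hρp⟩ :=
    exists_ideal_isPrime_and_pow_eq Ω hpS (Nat.sub_pos_of_lt hp.one_lt)
  have hpP : ((p : ℕ) : integralClosure S Ω) ∈ P := by simpa using (hPp p).2 dvd_rfl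
  have hl : ρ ^ (p - 1) = p := by simpa using hρp
  obtain ⟨x, hx, hxf⟩ := exists_injective_mk_mul_add_pow_eq (Ω := Ω) (integralClosure S Ω) hp hpP
    hρ0 hl hf (mt (hPp h).1 hh)
  obtain ⟨y, hy, hyg⟩ := exists_injective_mk_mul_add_pow_eq (Ω := Ω) (integralClosure S Ω) hp hpP
    hρ0 hl hg (mt (hPp k).1 hk)
  choose σ hσω hσμ using fun i j ↦
    exists_algHom_sub_eq_algebraMap (Ω := Ω) hp.pos hK (hxf i) (hyg j)
  let i₀ : Fin p := ⟨0, hp.pos⟩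
  exact ⟨linearIndependentMod_scaledMonomial_one_one hp.one_lt (fun s ↦ (hPp s).1) hρ0 hρ hρp σ hx
    hy hσω hσμ, isIntegral_scaledMonomial hρ0 hρp (σ i₀ i₀) (by rw [hσω, pow_one])
    (by rw [hσμ, pow_one])⟩

theorem scaledMonomial_prime_pred_linearIndependentMod_and_isIntegral (hp : p.Prime)
    (hpS : Prime (p : S)) {a b : S} (hf : f = h ^ p + (p : S) ^ 2 * a)
    (hg : g = k ^ p + b * (p : S)) (hh : ¬ (p : S) ∣ h) (hb : ¬ (p : S) ∣ b)
    (hK : IsBiradicalExtension L p f g ω μ) :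
    let β := scaledMonomial (algebraMap S K (p : S)) (ω - algebraMap S K h) (μ - algebraMap S K k)
      p p (p - 1) (p * (p - 1))
    LinearIndependentMod (p : S) β ∧ ∀ ij, IsIntegral S (β ij) := by
  let Ω := AlgebraicClosure K
  have : FaithfulSMul S Ω := .trans S L Ω
  have := isIntegrallyClosed_integralClosure S Ω
  have : CharZero Ω := charZero_of_injective_algebraMap (algebraMap L Ω).injective
  obtain ⟨P, hP, hPp, ρ, hρ, hρ0, hρp⟩ :=
    exists_ideal_isPrime_and_pow_eq Ω hpS (Nat.mul_pos hp.pos (Nat.sub_pos_of_lt hp.one_lt))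
  have hρ_pow_p : (ρ ^ p) ^ (p - 1) = p := by rw [← pow_mul, hρp, map_natCast]
  have hρ_pow_pred : (ρ ^ (p - 1)) ^ p = p := by rw [← pow_mul, mul_comm, hρp, map_natCast]
  obtain ⟨x, hx, hxf⟩ := exists_injective_mk_mul_add_pow_eq (Ω := Ω) (integralClosure S Ω) hp
    (by simpa using (hPp p).2 dvd_rfl) (pow_ne_zero p hρ0) hρ_pow_p hf (mt (hPp h).1 hh)
  obtain ⟨v, hv, -⟩ := exists_pow_eq_and_algebraMap_eq (integralClosure S Ω) hp.pos
    (show algebraMap K Ω μ ^ p = algebraMap S Ω g by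
      rw [← map_pow, hK.right_pow, ← IsScalarTower.algebraMap_apply])
  obtain ⟨y, hy, hyb⟩ := exists_eq_mul_and_dvd_of_add_pow_eq (t := v - algebraMap S _ k)
    (h := algebraMap S _ k) (a := algebraMap S _ b) hp (pow_ne_zero _ hρ0) hρ_pow_pred
    (by rw [sub_add_cancel, hv, hg]; simp [mul_comm])
  choose σ hσω hσμ using fun i ↦ exists_algHom_sub_eq_algebraMap (Ω := Ω) hp.pos hK
    (hxf i) (show (ρ ^ (p - 1) * y + algebraMap S _ k) ^ p = _ by rw [← hy, sub_add_cancel, hv])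
  have hyP : y ∉ P := fun hyP ↦ hb ((hPp b).1 (P.mem_of_dvd hyb hyP))
  let i₀ : Fin p := ⟨0, hp.pos⟩
  exact ⟨linearIndependentMod_scaledMonomial_prime_pred hp.one_lt (fun s ↦ (hPp s).1) hρ0 hρ hρp σ
    hx hyP hσω hσμ, isIntegral_scaledMonomial hρ0 hρp (σ i₀) (hσω i₀) (hσμ i₀)⟩

end IntegralBasis

section FreeIntegralClosure

theorem isIntegrallyClosed_of_forall_isIntegral_mem {S L K : Type*} [CommRing S] [Field L] [Field K]
    [Algebra S K] [Algebra L K] [Algebra.IsAlgebraic L K] {A : Subalgebra S K} {E : Subalgebra L K}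
    (hAE : (A : Set K) ⊆ E) (hA : ∀ z ∈ E, IsIntegral A z → z ∈ A) : IsIntegrallyClosed A := by
  rw [isIntegrallyClosed_iff (FractionRing A)]
  intro x hx
  let φ : FractionRing A →ₐ[A] K := IsFractionRing.liftAlgHom (g := Algebra.ofId A K)
    Subtype.val_injective
  have hφE : φ x ∈ E := by
    obtain ⟨n, d, -, rfl⟩ := IsFractionRing.div_surjective (A := A) x
    rw [map_div₀, φ.commutes, φ.commutes, div_eq_mul_inv]
    exact mul_mem (hAE n.2) (E.inv_mem_of_algebraic (x := ⟨d, hAE d.2⟩)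
      (Algebra.IsAlgebraic.isAlgebraic _))
  exact ⟨⟨φ x, hA _ hφE (hx.map φ)⟩, φ.injective (φ.commutes _)⟩

variable {S L K : Type*} [CommRing S] [IsDomain S] [Field L] [Algebra S L] [IsFractionRing S L]
  [Field K] [Algebra L K] [Algebra S K] [IsScalarTower S L K] {p : ℕ} {f g h k a b : S} {ω μ : K}

theorem integralClosure_free_of_scaledMonomial [FiniteDimensional L K] {q : S} (hq : q ≠ 0)
    {t s : K} {A B N n : ℕ} (hdeg : Module.finrank L K = p ^ 2)
    (hli : LinearIndependentMod q (scaledMonomial (algebraMap S K q) t s p A B N))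
    (hint : ∀ ij, IsIntegral S (scaledMonomial (algebraMap S K q) t s p A B N ij))
    (hspan : ∀ x : K, IsIntegral S x → q ^ n • x ∈ Submodule.span S
      (Set.range fun ij : Fin p × Fin p ↦ t ^ (ij.1 : ℕ) * s ^ (ij.2 : ℕ))) :
    Module.Free S (integralClosure S K) ∧ Module.finrank S (integralClosure S K) = p ^ 2 := by
  have : FaithfulSMul S K := .trans S L K
  have hqK : algebraMap S K q ≠ 0 := (FaithfulSMul.algebraMap_eq_zero_iff S K).not.2 hq
  have hcard : Fintype.card (Fin p × Fin p) = p ^ 2 := by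
    rw [Fintype.card_prod, Fintype.card_fin, sq]
  have hmem (x : K) (hx : IsIntegral S x) : x ∈ Submodule.span S
      (Set.range (scaledMonomial (algebraMap S K q) t s p A B N)) := by
    refine hli.mem_span_of_pow_smul_mem hqK n hx (Submodule.span_le.2 ?_ (hspan x hx))
    rintro _ ⟨ij, rfl⟩
    have : t ^ (ij.1 : ℕ) * s ^ (ij.2 : ℕ) = q ^ ((A * ij.1 + B * ij.2) / N) •
        scaledMonomial (algebraMap S K q) t s p A B N ij := by
      rw [Algebra.smul_def, map_pow, scaledMonomial, mul_div_cancel₀ _ (pow_ne_zero _ hqK)]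
    simp only [SetLike.mem_coe, this]
    exact Submodule.smul_mem _ _ (Submodule.subset_span ⟨ij, rfl⟩)
  rw [← hcard]
  exact integralClosure_free_and_finrank_eq_card
    (linearIndependent_of_isIntegral_mem_span (L := L) hmem (hcard.trans hdeg.symm)) hint hmem

variable [IsNoetherianRing S] [IsIntegrallyClosed S] [CharZero L]

theorem IsBiradicalExtension.sq_smul_mem_span_range_sub (hp : p.Prime)
    (hK : IsBiradicalExtension L p f g ω μ) (hf0 : f ≠ 0) (hg0 : g ≠ 0) (hf : PaperSquarefree f)
    (hg : PaperSquarefree g) (hfg : SatisfiesA1 f g) (h k : S) {x : K} (hx : IsIntegral S x) :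
    (p : S) ^ 2 • x ∈ Submodule.span S (Set.range fun ij : Fin p × Fin p ↦
      (ω - algebraMap S K h) ^ (ij.1 : ℕ) * (μ - algebraMap S K k) ^ (ij.2 : ℕ)) := by
  rw [span_range_pow_mul_pow_eq_adjoin hp.ne_zero hp.ne_zero
    (by rw [sub_add_cancel, hK.left_pow]) (by rw [sub_add_cancel, hK.right_pow]),
    adjoin_pair_sub_algebraMap]
  exact hK.sq_smul_mem_adjoin_pair hp hf0 hg0 hf hg hfg hx

theorem IsBiradicalExtension.isIntegrallyClosed_adjoin_left (hp : p.Prime) (hpS : Prime (p : S))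
    (hK : IsBiradicalExtension L p f g ω μ) (hf0 : f ≠ 0) (hg0 : g ≠ 0) (hf : PaperSquarefree f)
    (hg : PaperSquarefree g) (hfg : SatisfiesA1 f g) (hfh : f = h ^ p + a * (p : S))
    (ha : ¬ (p : S) ∣ a) : IsIntegrallyClosed (Algebra.adjoin S {ω}) := by
  have := hK.finiteDimensional hp.pos
  have : FaithfulSMul S K := .trans S L K
  have hspan : Submodule.span S (Set.range fun i : Fin p ↦ (ω - algebraMap S K h) ^ (i : ℕ)) =
      Subalgebra.toSubmodule (Algebra.adjoin S {ω}) := by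
    rw [span_range_pow_eq_adjoin hp.ne_zero (by rw [sub_add_cancel, hK.left_pow])]
    simpa using congr_arg Subalgebra.toSubmodule (adjoin_pair_sub_algebraMap ω ω h h)
  have hω : IsIntegral S ω := .of_pow hp.pos (hK.left_pow ▸ isIntegral_algebraMap)
  have : Algebra.IsIntegral S (Algebra.adjoin S {ω}) := .adjoin (by simpa)
  have hle : Algebra.adjoin S {ω} ≤ (Algebra.adjoin L {ω}).restrictScalars S :=
    Algebra.adjoin_le Algebra.subset_adjoin
  refine isIntegrallyClosed_of_forall_isIntegral_mem hle fun z hzE hz ↦ ?_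
  have hzS : IsIntegral S z := isIntegral_trans z hz
  have hmem := hK.sq_smul_mem_adjoin_left hp hf0 hg0 hf hg hfg hzS hzE
  exact hspan.le ((linearIndependentMod_sub_pow hp hpS hfh ha hK.left_pow).mem_span_of_pow_smul_mem
    ((FaithfulSMul.algebraMap_eq_zero_iff S K).not.2 hpS.ne_zero) 2 hzS (hspan.ge hmem))

theorem IsBiradicalExtension.integralClosure_free_of_dvd (hp : p.Prime) (hpS : Prime (p : S))
    (hK : IsBiradicalExtension L p f g ω μ) (hf : PaperSquarefree f) (hg : PaperSquarefree g)
    (hfg : SatisfiesA1 f g) (hfh : f = h ^ p + a * (p : S)) (hgk : g = k ^ p + b * (p : S))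
    (ha : (p : S) ∣ a) :
    Module.Free S (integralClosure S K) ∧ Module.finrank S (integralClosure S K) = p ^ 2 := by
  have := hK.finiteDimensional hp.pos
  have hh := hf.not_dvd_of_eq_pow_add_mul hpS hp.two_le hfh ha
  obtain ⟨a, rfl⟩ := ha
  have hfh' : f = h ^ p + (p : S) ^ 2 * a := by linear_combination hfh
  have hspan (x : K) (hx : IsIntegral S x) :=
    hK.sq_smul_mem_span_range_sub hp (hf.ne_zero hpS) (hg.ne_zero hpS) hf hg hfg h k hx
  by_cases hb : (p : S) ∣ b
  · have hk := hg.not_dvd_of_eq_pow_add_mul hpS hp.two_le hgk hb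
    obtain ⟨b, rfl⟩ := hb
    have hgk' : g = k ^ p + (p : S) ^ 2 * b := by linear_combination hgk
    obtain ⟨hli, hint⟩ :=
      scaledMonomial_one_one_linearIndependentMod_and_isIntegral hp hpS hfh' hgk' hh hk hK
    exact integralClosure_free_of_scaledMonomial hpS.ne_zero hK.finrank_eq hli hint hspan
  · obtain ⟨hli, hint⟩ :=
      scaledMonomial_prime_pred_linearIndependentMod_and_isIntegral hp hpS hfh' hgk hh hb hK
    exact integralClosure_free_of_scaledMonomial hpS.ne_zero hK.finrank_eq hli hint hspan

end FreeIntegralClosure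

theorem stmt0_general {S : Type*} [CommRing S] [IsDomain S] [IsNoetherianRing S]
    [IsIntegrallyClosed S] {L : Type*} [Field L] [CharZero L] [Algebra S L] [IsFractionRing S L]
    {K : Type*} [Field K] [Algebra L K] [Algebra S K] [IsScalarTower S L K] {p : ℕ} (hp : p.Prime)
    (hpS : Prime (p : S)) {f g h₁ h₂ a b : S} (hf : f = h₁ ^ p + a * (p : S))
    (hg : g = h₂ ^ p + b * (p : S)) (hf_sqf : PaperSquarefree f) (hg_sqf : PaperSquarefree g)
    (hfg : SatisfiesA1 f g) {ω μ : K} (hK : IsBiradicalExtension L p f g ω μ)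
    (hnic : ¬ IsIntegrallyClosed (Algebra.adjoin S {ω}) ∨
      ¬ IsIntegrallyClosed (Algebra.adjoin S {μ})) :
    Module.Free S (integralClosure S K) ∧ Module.finrank S (integralClosure S K) = p ^ 2 := by
  have hgf : SatisfiesA1 g f := fun P hP hgfP ↦ hfg P hP hgfP.symm
  have hf0 := hf_sqf.ne_zero hpS
  have hg0 := hg_sqf.ne_zero hpS
  rcases hnic with hω | hμ
  · refine hK.integralClosure_free_of_dvd hp hpS hf_sqf hg_sqf hfg hf hg (not_not.1 fun ha ↦ hω ?_)
    exact hK.isIntegrallyClosed_adjoin_left hp hpS hf0 hg0 hf_sqf hg_sqf hfg hf ha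
  · refine hK.symm.integralClosure_free_of_dvd hp hpS hg_sqf hf_sqf hgf hg hf
      (not_not.1 fun hb ↦ hμ ?_)
    exact hK.symm.isIntegrallyClosed_adjoin_left hp hpS hg0 hf0 hg_sqf hf_sqf hgf hg hb

theorem stmt0
    {S : Type*} [CommRing S] [IsDomain S] [IsNoetherianRing S] [IsIntegrallyClosed S]
    {L : Type*} [Field L] [CharZero L] [Algebra S L] [IsFractionRing S L]
    {K : Type*} [Field K] [Algebra L K] [Algebra S K] [IsScalarTower S L K]
    {p : ℕ} (hp : p.Prime) (hp3 : 3 ≤ p) (hpS : Prime ((p : ℕ) : S))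
    (hSmodp : IsIntegrallyClosed (S ⧸ Ideal.span {((p : ℕ) : S)}))
    {f g h₁ h₂ a b : S} (hf : f = h₁ ^ p + a * (p : S)) (hg : g = h₂ ^ p + b * (p : S))
    (hfg : (¬IsUnit f ∧ ¬IsUnit g ∧ PaperSquarefree f ∧ PaperSquarefree g ∧ SatisfiesA1 f g) ∨
      (IsUnit f ∧ IsUnit g ∧ (∀ x : S, x ^ p ≠ f) ∧ (∀ x : S, x ^ p ≠ g)))
    {ω μ : K} (hω : ω ^ p = algebraMap S K f) (hμ : μ ^ p = algebraMap S K g)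
    (hKgen : Algebra.adjoin L ({ω, μ} : Set K) = ⊤)
    (hdeg : Module.finrank L K = p ^ 2)
    (hnic : ¬IsIntegrallyClosed (Algebra.adjoin S ({ω} : Set K)) ∨
      ¬IsIntegrallyClosed (Algebra.adjoin S ({μ} : Set K))) :
    Module.Free S (integralClosure S K) ∧
      Module.finrank S (integralClosure S K) = p ^ 2 := by
  obtain ⟨hf_sqf, hg_sqf, hA1⟩ : PaperSquarefree f ∧ PaperSquarefree g ∧ SatisfiesA1 f g :=
    hfg.elim (·.2.2) fun h ↦
      ⟨paperSquarefree_of_isUnit h.1, paperSquarefree_of_isUnit h.2.1, satisfiesA1_of_isUnit h.1 g⟩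
  exact stmt0_general hp hpS hf hg hf_sqf hg_sqf hA1 ⟨hω, hμ, hKgen, hdeg⟩ hnic
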